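/- arXiv:2005.01700 — 2 statements merged into one kernel-verified Lean document; each statement's English description precedes it below -/
import Mathlib

section
/- Under the standing assumptions, let ℓ = ⌈log₂ λ⌉, and let x ∈ X and r > 0 be such that the closed ball B̄_d(x,(2λ)⁷r) is compact and contained in a topological disk U ⊂ X. Then there exists a continuum K ⊂ B̄_d(x,(2λ)⁶r) ∖ B_d(x,2λr) which separates B_d(x,r) from X ∖ B̄_d(x,(2λ)⁷r) and satisfies diam_q(K) ≤ 8 C_W C_D^{12+4ℓ} μ(B_d(x,r))^{1/2}, where diam_q(A) = sup_{a,b∈A} q(a,b). -/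
open Metric MeasureTheory Set Filter Topology UniformSpace ENNReal
open scoped NNReal

noncomputable section

/-- The set `B_{xy} = B(x, d(x,y)) ∪ B(y, d(x,y))`. -/
def pairBall {X : Type*} [MetricSpace X] (x y : X) : Set X :=
  Metric.ball x (dist x y) ∪ Metric.ball y (dist x y)

/-- A `δ`-chain from `x` to `y`: a finite sequence `z 0 = x, …, z m = y` with
consecutive distances at most `δ`. -/
def IsDeltaChain {X : Type*} [MetricSpace X] (δ : ℝ) (x y : X) (z : ℕ → X) (m : ℕ) : Prop :=
  z 0 = x ∧ z m = y ∧ ∀ j < m, dist (z j) (z (j + 1)) ≤ δ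

/-- `q^δ_{μ,s}(x,y)`: infimum of `∑ μ(B_{x_j x_{j-1}})^{1/s}` over `δ`-chains from `x` to `y`. -/
def qDelta {X : Type*} [MetricSpace X] [MeasurableSpace X]
    (μ : Measure X) (s δ : ℝ) (x y : X) : ℝ≥0∞ :=
  ⨅ (m : ℕ) (z : ℕ → X) (_ : IsDeltaChain δ x y z m),
    ∑ j ∈ Finset.range m, μ (pairBall (z j) (z (j + 1))) ^ (1 / s)

/-- `q_{μ,s}(x,y) = limsup_{δ → 0⁺} q^δ_{μ,s}(x,y)`. -/
def qmu {X : Type*} [MetricSpace X] [MeasurableSpace X]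
    (μ : Measure X) (s : ℝ) (x y : X) : ℝ≥0∞ :=
  Filter.limsup (fun δ => qDelta μ s δ x y) (nhdsWithin (0 : ℝ) (Set.Ioi 0))

/-- `μ` is a doubling measure with constant `CD`: balls have positive finite measure and
`μ(B(x,2r)) ≤ CD · μ(B(x,r))`. -/
def IsDoublingWith {X : Type*} [MetricSpace X] [MeasurableSpace X]
    (μ : Measure X) (CD : ℝ≥0) : Prop :=
  (∀ (x : X) (r : ℝ), 0 < r → 0 < μ (Metric.ball x r) ∧ μ (Metric.ball x r) < ⊤) ∧
    ∀ (x : X) (r : ℝ), 0 < r → μ (Metric.ball x (2 * r)) ≤ CD * μ (Metric.ball x r)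

/-- `μ` is a `CW`-weak metric doubling measure of dimension `s`:
`μ(B_{xy})^{1/s} ≤ CW · q_{μ,s}(x,y)` for all `x, y`. -/
def IsWMDM {X : Type*} [MetricSpace X] [MeasurableSpace X]
    (μ : Measure X) (s : ℝ) (CW : ℝ≥0) : Prop :=
  ∀ x y : X, μ (pairBall x y) ^ (1 / s) ≤ CW * qmu μ s x y

/-- A continuum is a compact connected set. -/
def IsContinuum {X : Type*} [TopologicalSpace X] (K : Set X) : Prop :=
  IsCompact K ∧ IsConnected K

/-- `X` is `λ`-linearly locally connected. -/
def IsLLC (X : Type*) [MetricSpace X] (lam : ℝ) : Prop :=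
  ∀ (x : X) (r : ℝ), 0 < r →
    (∀ y ∈ Metric.ball x r, ∀ z ∈ Metric.ball x r,
      ∃ K : Set X, IsContinuum K ∧ K ⊆ Metric.ball x (lam * r) ∧ y ∈ K ∧ z ∈ K) ∧
    (∀ y z : X, y ∉ Metric.ball x r → z ∉ Metric.ball x r →
      ∃ K : Set X, IsContinuum K ∧ K ⊆ (Metric.ball x (r / lam))ᶜ ∧ y ∈ K ∧ z ∈ K)

/-- The sphere `S²`, with the metric inherited from `ℝ³`. -/
abbrev Sphere2 : Set (EuclideanSpace ℝ (Fin 3)) := Metric.sphere 0 1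

/-- A circle domain in `S²`: an open connected set each of whose complementary
connected components is a point or a round closed disk (a closed metric ball). -/
def IsCircleDomainS2 (Ω : Set ↥Sphere2) : Prop :=
  IsOpen Ω ∧ IsConnected Ω ∧ ∀ p ∈ Ωᶜ,
    connectedComponentIn Ωᶜ p = {p} ∨
      ∃ (c : ↥Sphere2) (ρ : ℝ), 0 < ρ ∧ connectedComponentIn Ωᶜ p = Metric.closedBall c ρ

/-- A circle domain in the plane. -/
def IsCircleDomainC (Ω : Set ℂ) : Prop :=
  IsOpen Ω ∧ IsConnected Ω ∧ ∀ p ∈ Ωᶜ,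
    connectedComponentIn Ωᶜ p = {p} ∨
      ∃ (c : ℂ) (ρ : ℝ), 0 < ρ ∧ connectedComponentIn Ωᶜ p = Metric.closedBall c ρ

/-- The residual set `X̄ ∖ X` inside the completion of `X`. -/
def resid (X : Type*) [MetricSpace X] : Set (Completion X) :=
  (Set.range ((↑) : X → Completion X))ᶜ

/-- The collection of connected components of `X̄ ∖ X`. -/
def residComps (X : Type*) [MetricSpace X] : Set (Set (Completion X)) :=
  {C | ∃ p ∈ resid X, C = connectedComponentIn (resid X) p}

/-- Distance between two sets. -/
def setSetDist {Z : Type*} [MetricSpace Z] (A B : Set Z) : ℝ :=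
  sInf (Set.image2 dist A B)

/-- `f` is `η`-quasisymmetric, for a homeomorphism `η` of `[0,∞)`. -/
def IsQSWith {X Y : Type*} [MetricSpace X] [MetricSpace Y]
    (η : ℝ≥0 ≃ₜ ℝ≥0) (f : X → Y) : Prop :=
  ∀ x y z : X, x ≠ z →
    nndist (f x) (f y) ≤ η (nndist x y / nndist x z) * nndist (f x) (f z)

/-- `ℓ = ⌈log₂ λ⌉`. -/
def ellOf (lam : ℝ) : ℕ := (Int.ceil (Real.logb 2 lam)).toNat

/-- The constant `C_S = 16 C_W C_D^{28+16⌈log₂ λ⌉}`. -/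
def CSconst (lam : ℝ) (CD CW : ℝ≥0) : ℝ≥0∞ :=
  16 * (CW : ℝ≥0∞) * (CD : ℝ≥0∞) ^ (28 + 16 * ellOf lam)

/-- `K` separates `A` and `B`: `A` and `B` lie in different components of the complement of `K`. -/
def SeparatesSets {X : Type*} [TopologicalSpace X] (K A B : Set X) : Prop :=
  A ⊆ Kᶜ ∧ B ⊆ Kᶜ ∧
    ∀ p ∈ A, ∀ p' ∈ B, connectedComponentIn Kᶜ p ≠ connectedComponentIn Kᶜ p'

/-- A topological disk: a set homeomorphic to an open disk in the plane. -/
def IsTopDisk {X : Type*} [TopologicalSpace X] (U : Set X) : Prop :=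
  Nonempty (↥U ≃ₜ ↥(Metric.ball (0 : ℂ) 1))

/-- Lower line integral `∫_γ ρ ds` over `γ : [a,b] → Y`, as a supremum of lower sums
over partitions of `[a,b]`. -/
def lowerLineIntegral {Y : Type*} [PseudoEMetricSpace Y]
    (ρ : Y → ℝ≥0∞) (γ : ℝ → Y) (a b : ℝ) : ℝ≥0∞ :=
  ⨆ (n : ℕ) (t : ℕ → ℝ) (_ : t 0 = a) (_ : t n = b) (_ : ∀ j < n, t j ≤ t (j + 1)),
    ∑ j ∈ Finset.range n,
      (⨅ u ∈ Set.Icc (t j) (t (j + 1)), ρ (γ u)) * edist (γ (t j)) (γ (t (j + 1)))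

/-- `γ` (with parameter interval `[0,1]`) is locally rectifiable on the open interval `(0,1)`. -/
def LocRectifiableOn {Y : Type*} [PseudoEMetricSpace Y] (γ : ℝ → Y) : Prop :=
  ∀ c d : ℝ, 0 < c → c ≤ d → d < 1 → eVariationOn γ (Set.Icc c d) < ⊤

/-- The line integral of `ρ` over the open part of `γ`. -/
def openLineIntegral {Y : Type*} [PseudoEMetricSpace Y] (ρ : Y → ℝ≥0∞) (γ : ℝ → Y) : ℝ≥0∞ :=
  ⨆ (c : ℝ) (d : ℝ) (_ : 0 < c) (_ : c ≤ d) (_ : d < 1), lowerLineIntegral ρ γ c d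

/-- `ρ` is admissible for the path family `Γ`. -/
def IsAdmissible {Y : Type*} [PseudoEMetricSpace Y] (Γ : Set (ℝ → Y)) (ρ : Y → ℝ≥0∞) : Prop :=
  ∀ γ ∈ Γ, LocRectifiableOn γ → 1 ≤ openLineIntegral ρ γ

def borelSpaceBorel (Y : Type*) [TopologicalSpace Y] : @BorelSpace Y _ (borel Y) :=
  @BorelSpace.mk Y _ (borel Y) rfl

/-- The Hausdorff 2-measure of a metric space, normalized to coincide with Lebesgue measure
in the Euclidean plane. -/
def hausdorff2 (Y : Type*) [EMetricSpace Y] : @Measure Y (borel Y) :=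
  ENNReal.ofReal (Real.pi / 4) •
    @Measure.hausdorffMeasure Y _ (borel Y) (borelSpaceBorel Y) 2

/-- The conformal modulus of a path family in a metric space, with respect to the
(normalized) Hausdorff 2-measure. -/
def modulusH2 {Y : Type*} [EMetricSpace Y] (Γ : Set (ℝ → Y)) : ℝ≥0∞ :=
  ⨅ (ρ : Y → ℝ≥0∞) (_ : @Measurable Y ℝ≥0∞ (borel Y) _ ρ) (_ : IsAdmissible Γ ρ),
    @MeasureTheory.lintegral Y (borel Y) (hausdorff2 Y) fun y => ρ y ^ 2

/-- The conformal modulus of a path family in the plane, with respect to Lebesgue area measure. -/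
def modulusC (Γ : Set (ℝ → ℂ)) : ℝ≥0∞ :=
  ⨅ (ρ : ℂ → ℝ≥0∞) (_ : Measurable ρ) (_ : IsAdmissible Γ ρ), ∫⁻ z, ρ z ^ 2

/-- A homeomorphism between metric spaces is `K`-quasiconformal if it distorts moduli of
path families by a factor of at most `K` in both directions. -/
def IsQCWith {Y Z : Type*} [EMetricSpace Y] [EMetricSpace Z] (K : ℝ≥0∞) (f : Y ≃ₜ Z) : Prop :=
  ∀ Γ : Set (ℝ → Y),
    modulusH2 ((fun γ => (f : Y → Z) ∘ γ) '' Γ) ≤ K * modulusH2 Γ ∧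
      modulusH2 Γ ≤ K * modulusH2 ((fun γ => (f : Y → Z) ∘ γ) '' Γ)

/-- The family `Γ(A,B;G)` of paths joining `A` and `B` in `G` (parameter interval `[0,1]`). -/
def joinPaths (A B G : Set ℂ) : Set (ℝ → ℂ) :=
  {γ | ContinuousOn γ (Set.Icc 0 1) ∧ γ 0 ∈ A ∧ γ 1 ∈ B ∧
    γ 0 ∈ closure G ∧ γ 1 ∈ closure G ∧ ∀ u ∈ Set.Ioo (0 : ℝ) 1, γ u ∈ G}

/-- The constant `α = 2^{−2−2M−π²C_W²C_D^{1+log₂ C_X}/(8 log 2)}`. -/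
def alphaConst (M : ℕ) (CD CW : ℝ≥0) (CX : ℝ) : ℝ :=
  (2 : ℝ) ^ (-2 - 2 * (M : ℝ) -
    Real.pi ^ 2 * (CW : ℝ) ^ 2 * (CD : ℝ) ^ ((1 : ℝ) + Real.logb 2 CX) / (8 * Real.log 2))

/-!
Let `B` be a ball slightly larger than the annulus in which `K` is sought. Weak metric doubling
makes the `q`-distance across the annulus at least `2 τ`, where `τ` is comparable to
`μ(B(x, r)) ^ (1 / 2)`, so by compactness the `q^δ`-distance across it is at least `τ` once `δ`
is small. For such `δ` let `g` be the `q^δ`-distance from the inner ball, truncated at height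
`τ`. A discrete coarea inequality for `g` on `B` gives a level `t ∈ (0, τ)` such that every
connected subset of `{g = t}` has `q^δ`-diameter at most a constant times `μ(B) / τ`, which is
comparable to `μ(B(x, r)) ^ (1 / 2)`.

The component of `{g ≤ t}` around `x` lies in a topological disk, so after filling its holes its
boundary is connected: this is the unicoherence of the plane, proved here with continuous
logarithms. That boundary lies in `{g = t}` and blocks every connected set that joins the inner
ball to the outside. The boundaries obtained for `δ → 0` accumulate, along an ultrafilter, at a
continuum that still separates, and the diameter bound passes to the limit.
-/

section Components

variable {Y : Type*} [TopologicalSpace Y]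

theorem inter_frontier_nonempty_of_isPreconnected {C N : Set Y} (hC : IsPreconnected C)
    (hCN : (C ∩ N).Nonempty) (hCN' : (C \ N).Nonempty) : (C ∩ frontier N).Nonempty := by
  by_contra hne
  have hcover : C ⊆ interior N ∪ (closure N)ᶜ := fun y hy => by
    by_contra h
    simp only [mem_union, mem_compl_iff, not_or, not_not] at h
    exact hne ⟨y, hy, h.2, h.1⟩
  rcases hC.subset_or_subset isOpen_interior isClosed_closure.isOpen_compl
    (disjoint_compl_right.mono_left (interior_subset.trans subset_closure)) hcover with h | h
  · obtain ⟨y, hyC, hyN⟩ := hCN'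
    exact hyN (interior_subset (h hyC))
  · obtain ⟨y, hyC, hyN⟩ := hCN
    exact h hyC (subset_closure hyN)

theorem frontier_connectedComponentIn_compl_subset [LocallyConnectedSpace Y] {G : Set Y}
    (hG : IsClosed G) (y : Y) : frontier (connectedComponentIn Gᶜ y) ⊆ G := by
  intro w hw
  by_contra hwG
  have hopen {v : Y} : IsOpen (connectedComponentIn Gᶜ v) := hG.isOpen_compl.connectedComponentIn
  obtain ⟨v, hvw, hvy⟩ := mem_closure_iff.1 (frontier_subset_closure hw) _ hopen
    (mem_connectedComponentIn hwG)
  refine hopen.inter_frontier_eq.le ⟨?_, hw⟩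
  rw [connectedComponentIn_eq hvy, ← connectedComponentIn_eq hvw]
  exact mem_connectedComponentIn hwG

theorem isPreconnected_compl_connectedComponentIn_compl [LocallyConnectedSpace Y]
    [PreconnectedSpace Y] {G : Set Y} (hG : IsClosed G) (hGc : IsConnected G) (y : Y) :
    IsPreconnected (connectedComponentIn Gᶜ y)ᶜ := by
  obtain ⟨g, hg⟩ := hGc.nonempty
  have hG_avoids (v : Y) : G ⊆ (connectedComponentIn Gᶜ v)ᶜ :=
    subset_compl_comm.1 (connectedComponentIn_subset _ _)
  refine isPreconnected_of_forall g fun z hz => ?_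
  by_cases hzG : z ∈ G
  · exact ⟨G, hG_avoids y, hg, hzG, hGc.isPreconnected⟩
  set V := connectedComponentIn Gᶜ z
  have hzV : z ∈ V := mem_connectedComponentIn hzG
  have hfrontier : frontier V ⊆ G := frontier_connectedComponentIn_compl_subset hG z
  obtain ⟨w, hw⟩ : (frontier V).Nonempty :=
    nonempty_frontier_iff.2 ⟨⟨z, hzV⟩, fun h => hG_avoids z hg (h.ge (mem_univ g))⟩
  have hV_avoids : V ⊆ (connectedComponentIn Gᶜ y)ᶜ := fun v hvz hvy =>
    hz (by rwa [connectedComponentIn_eq hvy, ← connectedComponentIn_eq hvz])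
  refine ⟨G ∪ closure V, ?_, Or.inl hg, Or.inr (subset_closure hzV),
    hGc.isPreconnected.union w (hfrontier hw) (frontier_subset_closure hw)
      isPreconnected_connectedComponentIn.closure⟩
  rw [closure_eq_self_union_frontier]
  exact union_subset (hG_avoids y) (union_subset hV_avoids (hfrontier.trans (hG_avoids y)))

theorem isClosed_connectedComponentIn {F : Set Y} (hF : IsClosed F) (y : Y) :
    IsClosed (connectedComponentIn F y) := by
  by_cases hy : y ∈ F
  · exact isClosed_of_closure_subset
      (isPreconnected_connectedComponentIn.closure.subset_connectedComponentIn
        (subset_closure (mem_connectedComponentIn hy))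
        (closure_minimal (connectedComponentIn_subset F y) hF))
  · rw [connectedComponentIn_eq_empty hy]
    exact isClosed_empty

theorem frontier_sublevelComponent_subset [LocallyConnectedSpace Y] {g : Y → ℝ}
    (hg : Continuous g) (t : ℝ) (x : Y) :
    frontier (connectedComponentIn {y | g y ≤ t} x) ⊆ {y | g y = t} := by
  set E := connectedComponentIn {y | g y ≤ t} x
  have hE : IsClosed E := isClosed_connectedComponentIn (isClosed_le hg continuous_const) x
  intro y hy
  have hyE : y ∈ E := hE.frontier_subset hy
  have hyt : y ∈ {y | g y ≤ t} := connectedComponentIn_subset _ _ hyE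
  refine eq_of_le_of_not_lt hyt fun hlt => hy.2 ?_
  have hopen : IsOpen {z | g z < t} := isOpen_lt hg continuous_const
  have hsub : connectedComponentIn {z | g z < t} y ⊆ E := by
    rw [show E = connectedComponentIn {y | g y ≤ t} y from connectedComponentIn_eq hyE]
    exact connectedComponentIn_mono _ fun z (hz : g z < t) => hz.le
  exact interior_maximal hsub hopen.connectedComponentIn (mem_connectedComponentIn hlt)

end Components

section Logarithms

theorem eq_of_exp_eq_one {Y : Type*} [TopologicalSpace Y] {S : Set Y} (hS : IsPreconnected S)
    {h : Y → ℂ} (hc : ContinuousOn h S) (h1 : ∀ y ∈ S, Complex.exp (h y) = 1) {a b : Y}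
    (ha : a ∈ S) (hb : b ∈ S) : h a = h b := by
  have hfiber : IsDiscrete (Complex.exp ⁻¹' {1}) :=
    isDiscrete_iff_discreteTopology.2
      (Complex.isCoveringMapOn_exp 1 (by simp)).discreteTopology_fiber
  exact hS.constant_of_mapsTo hfiber hc h1 ha hb

variable {Y : Type*} [TopologicalSpace Y] [SimplyConnectedSpace Y] [LocallyPathConnectedSpace Y]

theorem exists_continuous_exp_eq {g : Y → ℂ} (hg : Continuous g) (h0 : ∀ y, g y ≠ 0) :
    ∃ f : C(Y, ℂ), ∀ y, Complex.exp (f y) = g y := by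
  obtain ⟨y⟩ : Nonempty Y := inferInstance
  obtain ⟨f, ⟨-, hf⟩, -⟩ := Complex.isCoveringMapOn_exp.existsUnique_continuousMap_lifts
    ⟨g, hg⟩ (Complex.exp_log (h0 y)) h0
  exact ⟨f, congrFun hf⟩

/- If `A ∩ B` split into `t` and `t'`, an Urysohn function `u` separating the two pieces would make
`exp (π i u)` on `A` and `exp (-π i u)` on `B` agree on `A ∩ B`. A logarithm of the glued function
differs from `π i u` by a constant on `A` and from `-π i u` by a constant on `B`, which is
contradictory because `u` jumps from `0` to `1`. -/
theorem isPreconnected_inter_of_union_eq_univ [NormalSpace Y] {A B : Set Y} (hA : IsClosed A)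
    (hB : IsClosed B) (hAc : IsPreconnected A) (hBc : IsPreconnected B) (hAB : A ∪ B = univ) :
    IsPreconnected (A ∩ B) := by
  classical
  rw [isPreconnected_closed_iff]
  rintro t t' ht ht' hsub ⟨p, hpAB, hpt⟩ ⟨q, hqAB, hqt'⟩
  by_contra hne
  have hdisj : Disjoint (A ∩ B ∩ t) (A ∩ B ∩ t') :=
    disjoint_left.2 fun z hz hz' => hne ⟨z, hz.1, hz.2, hz'.2⟩
  obtain ⟨u, hu0, hu1, -⟩ := exists_continuous_zero_one_of_isClosed
    ((hA.inter hB).inter ht) ((hA.inter hB).inter ht') hdisj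
  have hagree : ∀ z ∈ A ∩ B,
      Complex.exp (Real.pi * Complex.I * u z) = Complex.exp (-(Real.pi * Complex.I * u z)) := by
    intro z hz
    rcases hsub hz with h | h
    · simp [show u z = 0 from hu0 ⟨hz, h⟩]
    · simp [show u z = 1 from hu1 ⟨hz, h⟩, Complex.exp_neg]
  have hfrontier : frontier A ⊆ A ∩ B := fun z hz =>
    ⟨hA.frontier_subset hz, closure_minimal (compl_subset_iff_union.2 hAB) hB
      (frontier_eq_closure_inter_closure.subset hz).2⟩
  obtain ⟨ψ, hψ⟩ := exists_continuous_exp_eq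
    (Continuous.piecewise (fun z hz => hagree z (hfrontier hz)) (by fun_prop) (by fun_prop))
    (fun z => by by_cases hz : z ∈ A <;> simp [hz, Complex.exp_ne_zero])
  have hψA : ∀ z ∈ A, Complex.exp (ψ z) = Complex.exp (Real.pi * Complex.I * u z) :=
    fun z hz => by rw [hψ, piecewise_eq_of_mem _ _ _ hz]
  have hψB : ∀ z ∈ B, Complex.exp (ψ z) = Complex.exp (-(Real.pi * Complex.I * u z)) := by
    intro z hz
    by_cases hzA : z ∈ A
    · rw [hψA z hzA, hagree z ⟨hzA, hz⟩]
    · rw [hψ, piecewise_eq_of_notMem _ _ _ hzA]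
  have hconstA : ψ p - Real.pi * Complex.I * u p = ψ q - Real.pi * Complex.I * u q :=
    eq_of_exp_eq_one hAc (h := fun z => ψ z - Real.pi * Complex.I * u z) (by fun_prop)
      (fun z hz => by simp [Complex.exp_sub, hψA z hz, Complex.exp_ne_zero]) hpAB.1 hqAB.1
  have hconstB : ψ p + Real.pi * Complex.I * u p = ψ q + Real.pi * Complex.I * u q :=
    eq_of_exp_eq_one hBc (h := fun z => ψ z + Real.pi * Complex.I * u z) (by fun_prop)
      (fun z hz => by rw [Complex.exp_add, hψB z hz, ← Complex.exp_add, neg_add_cancel,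
        Complex.exp_zero]) hpAB.2 hqAB.2
  simp only [show u p = 0 from hu0 ⟨hpAB, hpt⟩, show u q = 1 from hu1 ⟨hqAB, hqt'⟩,
    Complex.ofReal_zero, Complex.ofReal_one, mul_zero, mul_one, sub_zero, add_zero]
    at hconstA hconstB
  have : (Real.pi : ℂ) * Complex.I = 0 := by linear_combination (hconstA - hconstB) / 2
  simp [Real.pi_ne_zero] at this

theorem isPreconnected_frontier_connectedComponentIn_compl [NormalSpace Y] {G : Set Y}
    (hG : IsClosed G) (hGc : IsConnected G) (y : Y) :
    IsPreconnected (frontier (connectedComponentIn Gᶜ y)) := by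
  have hopen : IsOpen (connectedComponentIn Gᶜ y) := hG.isOpen_compl.connectedComponentIn
  rw [hopen.frontier_eq]
  refine isPreconnected_inter_of_union_eq_univ isClosed_closure hopen.isClosed_compl
    isPreconnected_connectedComponentIn.closure
    (isPreconnected_compl_connectedComponentIn_compl hG hGc y) ?_
  exact univ_subset_iff.1 ((union_compl_self _).ge.trans (union_subset_union_left _ subset_closure))

end Logarithms

section PlanarHulls

/- Otherwise a logarithm of `z - q` on `range s`, extended over the bounded component `V`, would
glue with `z - q` outside `V` to a function without zeros that equals `z - q` on a large circle
about `q`; its logarithm would contradict the winding number of that circle. -/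
theorem not_isBounded_connectedComponentIn_compl_range {Y : Type*} [TopologicalSpace Y]
    [SimplyConnectedSpace Y] [LocallyPathConnectedSpace Y] {s : Y → ℂ} (hs : IsClosedEmbedding s)
    {q : ℂ} (hq : q ∉ range s) :
    ¬ Bornology.IsBounded (connectedComponentIn (range s)ᶜ q) := by
  classical
  intro hbounded
  set V := connectedComponentIn (range s)ᶜ q
  have hqV : q ∈ V := mem_connectedComponentIn hq
  obtain ⟨log_s, hlog_s⟩ := exists_continuous_exp_eq (g := fun y => s y - q)
    (hs.continuous.sub continuous_const) (fun y => sub_ne_zero.2 fun h : s y = q => hq ⟨y, h⟩)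
  obtain ⟨L, hL⟩ := log_s.exists_extension hs
  have hexpL : ∀ z ∈ range s, Complex.exp (L z) = z - q := by
    rintro _ ⟨y, rfl⟩
    rw [← hlog_s, ← hL]
    rfl
  have hfrontier : frontier V ⊆ range s :=
    frontier_connectedComponentIn_compl_subset hs.isClosed_range q
  obtain ⟨ψ, hψ⟩ := exists_continuous_exp_eq
    (Continuous.piecewise (f := fun z => Complex.exp (L z)) (g := fun z => z - q)
      (fun z hz => hexpL z (hfrontier hz)) (by fun_prop) (by fun_prop))
    (fun z => by
      by_cases hz : z ∈ V
      · simp [hz, Complex.exp_ne_zero]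
      · simpa [hz, sub_eq_zero] using fun h : z = q => hz (h ▸ hqV))
  obtain ⟨R, hR0, hR⟩ := hbounded.subset_ball_lt 0 q
  have hcircle (θ : ℝ) : Complex.exp (ψ (q + R * Complex.exp (θ * Complex.I))) =
      R * Complex.exp (θ * Complex.I) := by
    have hnotin : q + R * Complex.exp (θ * Complex.I) ∉ V := fun h => by
      simpa [dist_eq_norm, Complex.norm_exp_ofReal_mul_I, abs_of_pos hR0] using hR h
    rw [hψ, piecewise_eq_of_notMem _ _ _ hnotin, add_sub_cancel_left]
  have hwinding := eq_of_exp_eq_one isPreconnected_univ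
    (h := fun θ : ℝ => ψ (q + R * Complex.exp (θ * Complex.I)) - θ * Complex.I - Real.log R)
    (by fun_prop)
    (fun θ _ => by
      have : (R : ℂ) ≠ 0 := mod_cast hR0.ne'
      rw [Complex.exp_sub, Complex.exp_sub, hcircle, ← Complex.ofReal_exp, Real.exp_log hR0]
      field_simp [Complex.exp_ne_zero])
    (mem_univ 0) (mem_univ (2 * Real.pi))
  simp only [Complex.ofReal_zero, zero_mul, Complex.exp_zero, Complex.ofReal_mul,
    Complex.ofReal_ofNat, Complex.exp_two_pi_mul_I] at hwinding
  have : (Real.pi : ℂ) * Complex.I = 0 := by linear_combination hwinding / 2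
  simp [Real.pi_ne_zero] at this

theorem isPreconnected_setOf_lt_norm {R : ℝ} (hR : 0 < R) : IsPreconnected {z : ℂ | R < ‖z‖} := by
  have hexp : {z : ℂ | R < ‖z‖} = Complex.exp '' {w : ℂ | Real.log R < w.re} := by
    ext z
    constructor
    · intro hz
      have hz0 : z ≠ 0 := norm_pos_iff.1 (hR.trans hz)
      exact ⟨Complex.log z, by simpa [Complex.log_re] using Real.log_lt_log hR hz,
        Complex.exp_log hz0⟩
    · rintro ⟨w, hw, rfl⟩
      simpa only [mem_ofPred_eq, Complex.norm_exp, ← Real.log_lt_iff_lt_exp hR] using hw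
  rw [hexp]
  exact (convex_halfSpace_re_gt _).isPreconnected.image _ Complex.continuous_exp.continuousOn

theorem exists_isBounded_compl_connectedComponentIn_compl {G : Set ℂ}
    (hG : Bornology.IsBounded G) :
    ∃ z, Bornology.IsBounded (connectedComponentIn Gᶜ z)ᶜ := by
  obtain ⟨R, hR0, hR⟩ := hG.subset_closedBall_lt 0 0
  have hext : {z : ℂ | R < ‖z‖} ⊆ Gᶜ := fun z hz hzG =>
    hz.not_ge (mem_closedBall_zero_iff.1 (hR hzG))
  have hmem : ((R + 1 : ℝ) : ℂ) ∈ {z : ℂ | R < ‖z‖} :=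
    (lt_add_one R).trans_le (by rw [Complex.norm_real]; exact le_abs_self _)
  refine ⟨((R + 1 : ℝ) : ℂ), (isBounded_closedBall (x := 0) (r := R)).subset ?_⟩
  refine compl_subset_comm.1 fun z hz => ?_
  exact (isPreconnected_setOf_lt_norm hR0).subset_connectedComponentIn hmem hext
    (not_le.1 fun h => hz (mem_closedBall_zero_iff.2 h))

/- The hull is the complement of the unbounded component of `Gᶜ`; no bounded component of `Gᶜ`
leaves `range s`, because a component of `(range s)ᶜ` is unbounded. -/
theorem exists_isCompact_hull_of_subset_range {Y : Type*} [TopologicalSpace Y]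
    [SimplyConnectedSpace Y] [LocallyPathConnectedSpace Y] {s : Y → ℂ} (hs : IsClosedEmbedding s)
    {G : Set ℂ} (hG : IsCompact G) (hGc : IsConnected G) (hGs : G ⊆ range s) :
    ∃ N, IsCompact N ∧ G ⊆ N ∧ N ⊆ range s ∧ frontier N ⊆ G ∧ IsPreconnected (frontier N) := by
  obtain ⟨z, hz⟩ := exists_isBounded_compl_connectedComponentIn_compl hG.isBounded
  set W := connectedComponentIn Gᶜ z
  have hWG : W ⊆ Gᶜ := connectedComponentIn_subset _ _
  have hWopen : IsOpen W := hG.isClosed.isOpen_compl.connectedComponentIn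
  refine ⟨Wᶜ, Metric.isCompact_of_isClosed_isBounded hWopen.isClosed_compl hz,
    subset_compl_comm.1 hWG, ?_, ?_, ?_⟩
  · intro q hqW
    by_contra hqs
    refine not_isBounded_connectedComponentIn_compl_range hs hqs (hz.subset fun v hvq hvW => hqW ?_)
    have hvq' : v ∈ connectedComponentIn Gᶜ q :=
      connectedComponentIn_mono _ (compl_subset_compl.2 hGs) hvq
    rw [show W = connectedComponentIn Gᶜ q from
      (connectedComponentIn_eq hvW).trans (connectedComponentIn_eq hvq').symm]
    exact mem_connectedComponentIn fun h => hqs (hGs h)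
  · rw [frontier_compl]
    exact frontier_connectedComponentIn_compl_subset hG.isClosed z
  · rw [frontier_compl]
    exact isPreconnected_frontier_connectedComponentIn_compl hG.isClosed hGc z

end PlanarHulls

section FilledSets

variable {X : Type*} [TopologicalSpace X]

/-- Every continuum `E ⊆ F` can be filled in without reaching `p`: it lies in a set `N ∌ p` whose
boundary is connected and contained in `E`. In the plane, with `p` far away from `F`, one takes for
`N` the union of `E` and the bounded components of its complement. -/
def FillableFrom (p : X) (F : Set X) : Prop :=
  ∀ E ⊆ F, IsContinuum E → ∃ N, E ⊆ N ∧ p ∉ N ∧ frontier N ⊆ E ∧ IsPreconnected (frontier N)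

theorem fillableFrom_range [T2Space X] {Y : Type*} [TopologicalSpace Y] [CompactSpace Y]
    [SimplyConnectedSpace Y] [LocallyPathConnectedSpace Y] (φ : OpenPartialHomeomorph X ℂ)
    {j : Y → X} (hj : Continuous j) (hinj : Function.Injective j) (hsource : range j ⊆ φ.source)
    {p : X} (hp : p ∉ range j) : FillableFrom p (range j) := by
  intro E hEj hE
  have hjsource (y : Y) : j y ∈ φ.source := hsource (mem_range_self y)
  have hembedding : IsClosedEmbedding (φ ∘ j) :=
    (φ.continuousOn.comp_continuous hj hjsource).isClosedEmbedding
      fun a b hab => hinj (φ.injOn (hjsource a) (hjsource b) hab)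
  have hEsource : E ⊆ φ.source := hEj.trans hsource
  have hφE : ContinuousOn φ E := φ.continuousOn.mono hEsource
  obtain ⟨N, hN, hEN, hNj, hfrontier, hconnected⟩ :=
    exists_isCompact_hull_of_subset_range hembedding (hE.1.image_of_continuousOn hφE)
      (hE.2.image _ hφE) (by rw [range_comp]; exact image_mono hEj)
  have hNtarget : N ⊆ φ.target := hNj.trans (by
    rintro _ ⟨y, rfl⟩
    exact φ.map_source (hjsource y))
  have hsymmN : φ.symm '' N ⊆ range j := by
    rw [image_subset_iff]
    intro w hw
    obtain ⟨y, rfl⟩ := hNj hw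
    exact ⟨y, (φ.left_inv (hjsource y)).symm⟩
  have hclosed : IsClosed (φ.symm '' N) :=
    (hN.image_of_continuousOn (φ.continuousOn_symm.mono hNtarget)).isClosed
  have hpreimage : φ.symm '' (φ '' E) = E := (φ.leftInvOn.mono hEsource).image_image
  have himage : φ.IsImage (φ.symm '' N) N := fun x hx =>
    ⟨fun h => ⟨φ x, h, φ.left_inv hx⟩, by
      rintro ⟨w, hw, rfl⟩
      rwa [φ.right_inv (hNtarget hw)]⟩
  have hfrontier_eq : frontier (φ.symm '' N) = φ.symm '' frontier N := by
    have := himage.frontier.symm_image_eq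
    rwa [inter_eq_right.2 (hN.isClosed.frontier_subset.trans hNtarget), eq_comm,
      inter_eq_right.2 (hclosed.frontier_subset.trans (hsymmN.trans hsource))] at this
  refine ⟨φ.symm '' N, ?_, fun h => hp (hsymmN h), ?_, ?_⟩
  · rw [← hpreimage]
    exact image_mono hEN
  · rw [hfrontier_eq, ← hpreimage]
    exact image_mono hfrontier
  · rw [hfrontier_eq]
    exact hconnected.image _
      (φ.continuousOn_symm.mono (hN.isClosed.frontier_subset.trans hNtarget))

theorem exists_openPartialHomeomorph_source_eq_compl_singleton {f : X → ↥Sphere2}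
    (hf : IsOpenEmbedding f) (p : X) :
    ∃ φ : OpenPartialHomeomorph X ℂ, φ.source = {p}ᶜ := by
  have : Fact (Module.finrank ℝ (EuclideanSpace ℝ (Fin 3)) = 2 + 1) := ⟨by simp⟩
  have : Nonempty X := ⟨p⟩
  refine ⟨((hf.toOpenPartialHomeomorph f).trans (stereographic' 2 (f p))).trans
    Complex.orthonormalBasisOneI.repr.symm.toHomeomorph.toOpenPartialHomeomorph, ?_⟩
  ext y
  simp [hf.injective.eq_iff]

theorem IsTopDisk.exists_closedBall_embedding {U F : Set X} (hU : IsTopDisk U) (hF : IsCompact F)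
    (hFU : F ⊆ U) : ∃ ρ > 0, ∃ j : closedBall (0 : ℂ) ρ → X,
      Continuous j ∧ Function.Injective j ∧ F ⊆ range j ∧ ∃ p, p ∉ range j := by
  obtain ⟨e⟩ := hU
  have hF' : IsCompact ((↑) ⁻¹' F : Set U) :=
    (IsInducing.subtypeVal.isCompact_preimage_iff (by simpa using hFU)).2 hF
  obtain ⟨ρ, ⟨hρ0, hρ1⟩, hρ⟩ := exists_pos_lt_subset_ball one_pos
    (hF'.image (f := fun u => (e u : ℂ)) (by fun_prop)).isClosed
    (image_subset_iff.2 fun u _ => (e u).2)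
  obtain ⟨w, hρw, hw1⟩ := exists_between hρ1
  have hsub : closedBall (0 : ℂ) ρ ⊆ ball 0 1 := closedBall_subset_ball hρ1
  have hi : Function.Injective fun z : ball (0 : ℂ) 1 => (e.symm z : X) :=
    Subtype.val_injective.comp e.symm.injective
  refine ⟨ρ, hρ0, fun z => e.symm (inclusion hsub z), by fun_prop,
    hi.comp (inclusion_injective hsub), ?_, e.symm ⟨w, ?_⟩, ?_⟩
  · intro y hy
    have hy' : (e ⟨y, hFU hy⟩ : ℂ) ∈ ball 0 ρ := hρ ⟨⟨y, hFU hy⟩, hy, rfl⟩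
    exact ⟨⟨e ⟨y, hFU hy⟩, ball_subset_closedBall hy'⟩, by simp [inclusion]⟩
  · simpa [abs_of_pos (hρ0.trans hρw)] using hw1
  · rintro ⟨z, hz⟩
    have hzw : (z : ℂ) = w := congrArg Subtype.val (hi hz)
    have hzρ : ‖(w : ℂ)‖ ≤ ρ := hzw ▸ mem_closedBall_zero_iff.1 z.2
    rw [Complex.norm_real, Real.norm_of_nonneg (hρ0.trans hρw).le] at hzρ
    exact hzρ.not_gt hρw

theorem IsTopDisk.exists_fillableFrom {f : X → ↥Sphere2} (hf : IsOpenEmbedding f) {U F : Set X}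
    (hU : IsTopDisk U) (hF : IsCompact F) (hFU : F ⊆ U) : ∃ p ∉ F, FillableFrom p F := by
  have : T2Space X := hf.isEmbedding.t2Space
  obtain ⟨ρ, hρ, j, hj, hinj, hFj, p, hp⟩ := hU.exists_closedBall_embedding hF hFU
  obtain ⟨φ, hφ⟩ := exists_openPartialHomeomorph_source_eq_compl_singleton hf p
  have hball : Convex ℝ (closedBall (0 : ℂ) ρ) := convex_closedBall 0 ρ
  have := hball.contractibleSpace ⟨0, mem_closedBall_self hρ.le⟩
  have := hball.locallyPathConnectedSpace
  have hfill : FillableFrom p (range j) :=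
    fillableFrom_range φ hj hinj (hφ ▸ subset_compl_singleton_iff.2 hp) hp
  exact ⟨p, fun h => hp (hFj h), fun E hE => hfill E (hE.trans hFj)⟩

end FilledSets

section LinearLocalConnectedness

variable {X : Type*} [MetricSpace X] {lam : ℝ}

theorem IsLLC.preconnectedSpace (hX : IsLLC X lam) : PreconnectedSpace X where
  isPreconnected_univ := isPreconnected_of_forall_pair fun a _ b _ => by
    have hr : 0 < dist b a + 1 := by positivity
    obtain ⟨K, hK, -, ha, hb⟩ := (hX a _ hr).1 a (mem_ball_self hr) b (by simp)
    exact ⟨K, subset_univ K, ha, hb, hK.2.isPreconnected⟩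

theorem IsLLC.eventually_exists_isContinuum (hX : IsLLC X lam) (hlam : 0 < lam) {V : Set X} {a : X}
    (hV : V ∈ 𝓝 a) : ∀ᶠ b in 𝓝 a, ∃ C ⊆ V, IsContinuum C ∧ a ∈ C ∧ b ∈ C := by
  obtain ⟨ε, hε, hεV⟩ := Metric.mem_nhds_iff.1 hV
  have hε' : 0 < ε / lam := div_pos hε hlam
  filter_upwards [ball_mem_nhds a hε'] with b hb
  obtain ⟨C, hC, hCε, haC, hbC⟩ := (hX a _ hε').1 a (mem_ball_self hε') b hb
  rw [mul_div_cancel₀ _ hlam.ne'] at hCε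
  exact ⟨C, hCε.trans hεV, hC, haC, hbC⟩

theorem IsLLC.locallyConnectedSpace (hX : IsLLC X lam) (hlam : 0 < lam) :
    LocallyConnectedSpace X := by
  refine locallyConnectedSpace_iff_connected_subsets.2 fun a V hV =>
    ⟨connectedComponentIn V a, ?_, isPreconnected_connectedComponentIn,
      connectedComponentIn_subset V a⟩
  filter_upwards [hX.eventually_exists_isContinuum hlam hV] with b ⟨C, hCV, hC, haC, hbC⟩
  exact hC.2.isPreconnected.subset_connectedComponentIn haC hCV hbC

theorem IsLLC.exists_isContinuum_of_isPreconnected (hX : IsLLC X lam) (hlam : 0 < lam)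
    {S V : Set X} (hS : IsPreconnected S) (hV : IsOpen V) (hSV : S ⊆ V) {a b : X} (ha : a ∈ S)
    (hb : b ∈ S) : ∃ C ⊆ V, IsContinuum C ∧ a ∈ C ∧ b ∈ C := by
  refine hS.induction₂ (fun a b => ∃ C ⊆ V, IsContinuum C ∧ a ∈ C ∧ b ∈ C) ?_ ?_ ?_ ha hb
  · exact fun y hy => nhdsWithin_le_nhds
      (hX.eventually_exists_isContinuum hlam (hV.mem_nhds (hSV hy)))
  · rintro y₁ y₂ y₃ - - - ⟨C, hCV, hC, h₁, h₂⟩ ⟨D, hDV, hD, h₂', h₃⟩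
    exact ⟨C ∪ D, union_subset hCV hDV, ⟨hC.1.union hD.1, hC.2.union ⟨y₂, h₂, h₂'⟩ hD.2⟩,
      Or.inl h₁, Or.inr h₃⟩
  · rintro y₁ y₂ - - ⟨C, hCV, hC, h₁, h₂⟩
    exact ⟨C, hCV, hC, h₂, h₁⟩

end LinearLocalConnectedness

section ChainDistance

variable {X : Type*} [MetricSpace X]

theorem pairBall_comm (x y : X) : pairBall x y = pairBall y x := by
  rw [pairBall, pairBall, dist_comm x y, union_comm]

theorem pairBall_subset_ball {x y : X} {ε : ℝ} (h : dist x y ≤ ε) :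
    pairBall x y ⊆ Metric.ball x (2 * ε) := by
  have hε : 0 ≤ ε := dist_nonneg.trans h
  refine union_subset (ball_subset_ball (by linarith)) (ball_subset_ball' ?_)
  rw [dist_comm y x]
  linarith

theorem IsDeltaChain.mono {δ δ' : ℝ} {x y : X} {z : ℕ → X} {m : ℕ} (hz : IsDeltaChain δ x y z m)
    (h : δ ≤ δ') : IsDeltaChain δ' x y z m :=
  ⟨hz.1, hz.2.1, fun j hj => (hz.2.2 j hj).trans h⟩

variable [MeasurableSpace X] {μ : Measure X} {s δ : ℝ}

theorem qDelta_le_sum {x y : X} {z : ℕ → X} {m : ℕ} (hz : IsDeltaChain δ x y z m) :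
    qDelta μ s δ x y ≤ ∑ j ∈ Finset.range m, μ (pairBall (z j) (z (j + 1))) ^ (1 / s) :=
  iInf_le_of_le m (iInf₂_le z hz)

theorem le_qDelta {x y : X} {T : ℝ≥0∞}
    (h : ∀ m z, IsDeltaChain δ x y z m →
      T ≤ ∑ j ∈ Finset.range m, μ (pairBall (z j) (z (j + 1))) ^ (1 / s)) :
    T ≤ qDelta μ s δ x y :=
  le_iInf fun m => le_iInf₂ (h m)

theorem qDelta_anti {δ' : ℝ} (h : δ ≤ δ') (x y : X) : qDelta μ s δ' x y ≤ qDelta μ s δ x y :=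
  le_qDelta fun _ _ hz => qDelta_le_sum (hz.mono h)

theorem qDelta_self (x : X) : qDelta μ s δ x x = 0 := by
  have hz : IsDeltaChain δ x x (fun _ => x) 0 := ⟨rfl, rfl, fun j hj => absurd hj j.not_lt_zero⟩
  simpa using qDelta_le_sum (μ := μ) (s := s) hz

theorem qDelta_le_of_dist_le {x y : X} (h : dist x y ≤ δ) :
    qDelta μ s δ x y ≤ μ (pairBall x y) ^ (1 / s) := by
  have hz : IsDeltaChain δ x y (fun j => if j = 0 then x else y) 1 := by
    refine ⟨rfl, rfl, fun j hj => ?_⟩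
    obtain rfl := Nat.lt_one_iff.1 hj
    exact h
  simpa using qDelta_le_sum (μ := μ) (s := s) hz

theorem qDelta_triangle (x y w : X) :
    qDelta μ s δ x w ≤ qDelta μ s δ x y + qDelta μ s δ y w := by
  rw [← tsub_le_iff_left]
  refine le_qDelta fun n v ⟨hv0, hvn, hv⟩ => ?_
  rw [tsub_le_iff_left, ← tsub_le_iff_right]
  refine le_qDelta fun m z ⟨hz0, hzm, hz⟩ => ?_
  rw [tsub_le_iff_right]
  let u : ℕ → X := fun j => if j < m then z j else v (j - m)
  have hu_left : ∀ j ≤ m, u j = z j := by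
    intro j hj
    rcases hj.lt_or_eq with hj | rfl
    · exact if_pos hj
    · simp [u, hv0, hzm]
  have hu_right (j : ℕ) : u (m + j) = v j := by simp [u]
  have hu : IsDeltaChain δ x w u (m + n) := by
    refine ⟨(hu_left 0 m.zero_le).trans hz0, (hu_right n).trans hvn, fun j hj => ?_⟩
    rcases lt_or_ge j m with hjm | hjm
    · rw [hu_left j hjm.le, hu_left (j + 1) hjm]
      exact hz j hjm
    · obtain ⟨k, rfl⟩ := Nat.exists_eq_add_of_le hjm
      rw [add_assoc, hu_right, hu_right]
      exact hv k (by omega)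
  refine (qDelta_le_sum hu).trans_eq ?_
  rw [Finset.sum_range_add]
  congr 1
  · refine Finset.sum_congr rfl fun j hj => ?_
    have hjm := Finset.mem_range.1 hj
    rw [hu_left j hjm.le, hu_left (j + 1) hjm]
  · exact Finset.sum_congr rfl fun j _ => by rw [add_assoc, hu_right, hu_right]

theorem qmu_le_of_forall_qDelta_le {x y : X} {S : ℝ≥0∞} (h : ∀ δ > 0, qDelta μ s δ x y ≤ S) :
    qmu μ s x y ≤ S :=
  limsup_le_of_le (by isBoundedDefault) (eventually_mem_nhdsWithin.mono h)

/-- A chain that leaves the ball `B(x, R)` does so with a step of length at most `δ`, hence lands in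
the annulus `R ≤ dist b' x ≤ R + δ`. -/
theorem le_qDelta_of_forall_annulus {R : ℝ} {x a b : X} {T : ℝ≥0∞} (ha : a ∈ Metric.ball x R)
    (hb : b ∉ Metric.ball x R)
    (hT : ∀ b', R ≤ dist b' x → dist b' x ≤ R + δ → T ≤ qDelta μ s δ a b') :
    T ≤ qDelta μ s δ a b := by
  classical
  refine le_qDelta fun m z ⟨hz0, hzm, hz⟩ => ?_
  have hexit : ∃ j, z j ∉ Metric.ball x R := ⟨m, hzm ▸ hb⟩
  have hkm : Nat.find hexit ≤ m := Nat.find_min' hexit (hzm ▸ hb)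
  have hk : z (Nat.find hexit) ∉ Metric.ball x R := Nat.find_spec hexit
  have hbefore : ∀ j < Nat.find hexit, z j ∈ Metric.ball x R := fun j hj =>
    not_not.1 (Nat.find_min hexit hj)
  generalize Nat.find hexit = k at hkm hk hbefore
  obtain _ | i := k
  · exact absurd (hz0 ▸ ha) hk
  have hi : dist (z i) x < R := hbefore i i.lt_succ_self
  have hstep : dist (z (i + 1)) (z i) ≤ δ := dist_comm (z i) (z (i + 1)) ▸ hz i hkm
  calc T ≤ qDelta μ s δ a (z (i + 1)) :=
        hT _ (not_lt.1 hk) (by linarith [dist_triangle (z (i + 1)) (z i) x])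
    _ ≤ ∑ j ∈ Finset.range (i + 1), μ (pairBall (z j) (z (j + 1))) ^ (1 / s) :=
        qDelta_le_sum ⟨hz0, rfl, fun j hj => hz j (hj.trans_le hkm)⟩
    _ ≤ _ := Finset.sum_le_sum_of_subset (Finset.range_mono hkm)

/-- The cost `μ(B_{ay})^{1/s}` of a single step from `a` to `y` tends to zero as `y` tends to `a`.
This is the input needed for the continuity of the chain distances `q^δ_{μ,s}`. -/
def VanishesOnDiagonal (μ : Measure X) (s : ℝ) : Prop :=
  ∀ a, Tendsto (fun y => μ (pairBall a y) ^ (1 / s)) (𝓝 a) (𝓝 0)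

theorem VanishesOnDiagonal.eventually_qDelta_le_add (hμ : VanishesOnDiagonal μ s) (hδ : 0 < δ)
    {ε : ℝ≥0∞} (hε : 0 < ε) (a b : X) :
    ∀ᶠ p in 𝓝 (a, b), qDelta μ s δ a b ≤ qDelta μ s δ p.1 p.2 + ε := by
  have hclose (c : X) : ∀ᶠ c' in 𝓝 c, dist c c' ≤ δ ∧ μ (pairBall c c') ^ (1 / s) ≤ ε / 2 := by
    filter_upwards [closedBall_mem_nhds c hδ,
      (hμ c).eventually_le_const (ENNReal.half_pos hε.ne')] with c' hc' hcost
    exact ⟨dist_comm c' c ▸ hc', hcost⟩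
  rw [nhds_prod_eq]
  filter_upwards [(hclose a).prod_mk (hclose b)] with ⟨a', b'⟩ ⟨⟨haδ, haε⟩, hbδ, hbε⟩
  rw [dist_comm] at hbδ
  rw [pairBall_comm] at hbε
  calc qDelta μ s δ a b
      ≤ qDelta μ s δ a a' + (qDelta μ s δ a' b' + qDelta μ s δ b' b) :=
        (qDelta_triangle a a' b).trans (add_le_add le_rfl (qDelta_triangle a' b' b))
    _ ≤ ε / 2 + (qDelta μ s δ a' b' + ε / 2) := by
        gcongr
        · exact (qDelta_le_of_dist_le haδ).trans haε
        · exact (qDelta_le_of_dist_le hbδ).trans hbε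
    _ = qDelta μ s δ a' b' + ε := by rw [add_left_comm, ENNReal.add_halves]

theorem VanishesOnDiagonal.eventually_lt_qDelta (hμ : VanishesOnDiagonal μ s) {a b : X} {T : ℝ≥0∞}
    (hT : T < qmu μ s a b) :
    ∀ᶠ p in 𝓝[>] (0 : ℝ) ×ˢ 𝓝 (a, b), T < qDelta μ s p.1 p.2.1 p.2.2 := by
  obtain ⟨ε, hε, hTε⟩ := ENNReal.lt_iff_exists_add_pos_lt.1 hT
  obtain ⟨δ, hδε, hδ : 0 < δ⟩ := ((frequently_lt_of_lt_limsup (by isBoundedDefault)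
    hTε).and_eventually self_mem_nhdsWithin).exists
  filter_upwards [(eventually_nhdsWithin_of_eventually_nhds (eventually_le_nhds hδ)).prod_mk
    (hμ.eventually_qDelta_le_add hδ (ENNReal.coe_pos.2 hε) a b)] with ⟨δ', a', b'⟩ ⟨hδ', hab⟩
  exact (lt_of_add_lt_add_right (hδε.trans_le hab)).trans_le (qDelta_anti hδ' a' b')

theorem VanishesOnDiagonal.eventually_forall_lt_qDelta (hμ : VanishesOnDiagonal μ s)
    {K : Set (X × X)} (hK : IsCompact K) {T : ℝ≥0∞} (hT : ∀ p ∈ K, T < qmu μ s p.1 p.2) :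
    ∀ᶠ δ in 𝓝[>] 0, ∀ p ∈ K, T < qDelta μ s δ p.1 p.2 :=
  (Eventually.curry (hK.mem_prod_nhdsSet_of_forall fun p hp =>
    hμ.eventually_lt_qDelta (hT p hp))).mono fun _ h => h.self_of_nhdsSet

theorem VanishesOnDiagonal.eventually_forall_le_qDelta (hμ : VanishesOnDiagonal μ s)
    {x : X} {R₁ R₂ R₃ : ℝ} (h₁₂ : R₁ < R₂) (h₂₃ : R₂ < R₃) (hc : IsCompact (closedBall x R₃))
    {T : ℝ≥0∞} (hT : ∀ a ∈ closedBall x R₁, ∀ b ∉ Metric.ball x R₂, T < qmu μ s a b) :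
    ∀ᶠ δ in 𝓝[>] 0, ∀ a ∈ closedBall x R₁, ∀ b ∉ Metric.ball x R₂, T ≤ qDelta μ s δ a b := by
  have hc₁ : IsCompact (closedBall x R₁) :=
    hc.of_isClosed_subset isClosed_closedBall (closedBall_subset_closedBall (h₁₂.trans h₂₃).le)
  filter_upwards [hμ.eventually_forall_lt_qDelta (hc₁.prod (hc.diff isOpen_ball))
      fun p hp => hT p.1 hp.1 p.2 hp.2.2,
    eventually_nhdsWithin_of_eventually_nhds (eventually_le_nhds (sub_pos.2 h₂₃))]
    with δ hδ hδR a ha b hb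
  refine le_qDelta_of_forall_annulus (closedBall_subset_ball h₁₂ ha) hb fun b' hR hRδ => ?_
  exact (hδ (a, b') ⟨ha, mem_closedBall.2 (by linarith), not_lt.2 hR⟩).le

end ChainDistance

section DoublingMeasures

theorem exists_finset_isSeparated_isCover {X : Type*} [PseudoEMetricSpace X] {F : Set X}
    (hF : IsCompact F) {ε : ℝ≥0} (hε : ε ≠ 0) :
    ∃ I : Finset X, ↑I ⊆ F ∧ IsSeparated ε (I : Set X) ∧ IsCover ε F (I : Set X) := by
  have hpack : packingNumber ε F ≠ ⊤ := by
    obtain ⟨N, -, hN, hcov⟩ := exists_finite_isCover_of_isCompact (div_ne_zero hε two_ne_zero) hF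
    have h := packingNumber_two_mul_le_externalCoveringNumber (ε / 2) F
    rw [mul_div_cancel₀ ε two_ne_zero] at h
    exact (h.trans hcov.externalCoveringNumber_le_encard).trans_lt hN.encard_lt_top |>.ne
  have hfin : (maximalSeparatedSet ε F).Finite := by
    rwa [← encard_ne_top_iff, encard_maximalSeparatedSet hpack]
  refine ⟨hfin.toFinset, ?_⟩
  rw [hfin.coe_toFinset]
  exact ⟨maximalSeparatedSet_subset, isSeparated_maximalSeparatedSet,
    isCover_maximalSeparatedSet hpack⟩

variable {X : Type*} [MetricSpace X] [MeasurableSpace X] {μ : Measure X} {CD : ℝ≥0} {s : ℝ}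

theorem IsDoublingWith.measure_ball_ne_top (hμ : IsDoublingWith μ CD) (x : X) (r : ℝ) :
    μ (Metric.ball x r) ≠ ⊤ := by
  rcases le_or_gt r 0 with hr | hr
  · simp [ball_eq_empty.2 hr]
  · exact (hμ.1 x r hr).2.ne

theorem IsDoublingWith.measure_pairBall_rpow_ne_top (hμ : IsDoublingWith μ CD) (hs : 0 ≤ s)
    (x y : X) : μ (pairBall x y) ^ (1 / s) ≠ ⊤ :=
  rpow_ne_top_of_nonneg (one_div_nonneg.2 hs)
    (measure_ne_top_of_subset (pairBall_subset_ball le_rfl) (hμ.measure_ball_ne_top _ _))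

theorem IsDoublingWith.measure_ball_two_pow_mul_le (hμ : IsDoublingWith μ CD) (x : X) {r : ℝ}
    (hr : 0 < r) (n : ℕ) : μ (Metric.ball x (2 ^ n * r)) ≤ CD ^ n * μ (Metric.ball x r) := by
  induction n with
  | zero => simp
  | succ n ih =>
    calc μ (Metric.ball x (2 ^ (n + 1) * r)) = μ (Metric.ball x (2 * (2 ^ n * r))) := by ring_nf
      _ ≤ CD * μ (Metric.ball x (2 ^ n * r)) := hμ.2 x _ (by positivity)
      _ ≤ CD * (CD ^ n * μ (Metric.ball x r)) := by gcongr
      _ = CD ^ (n + 1) * μ (Metric.ball x r) := by ring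

theorem IsDoublingWith.one_le [Nonempty X] (hμ : IsDoublingWith μ CD) : (1 : ℝ≥0∞) ≤ CD := by
  obtain ⟨x⟩ := ‹Nonempty X›
  obtain ⟨hpos, hfin⟩ := hμ.1 x 1 one_pos
  have h : 1 * μ (Metric.ball x 1) ≤ CD * μ (Metric.ball x 1) := by
    rw [one_mul]
    exact (measure_mono (ball_subset_ball (by norm_num))).trans (hμ.2 x 1 one_pos)
  exact (ENNReal.mul_le_mul_iff_left hpos.ne' hfin.ne).1 h

variable [OpensMeasurableSpace X]

theorem IsDoublingWith.tendsto_measure_ball (hμ : IsDoublingWith μ CD) (a : X) :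
    Tendsto (fun r => μ (Metric.ball a r)) (𝓝[>] 0) (𝓝 (μ {a})) := by
  have hinter : ⋂ r > (0 : ℝ), Metric.ball a r = {a} := by
    ext y
    simp only [mem_iInter, mem_ball, mem_singleton_iff]
    exact ⟨fun h => dist_le_zero.1 (le_of_forall_gt fun r hr => h r hr),
      fun h r hr => by simpa [h] using hr⟩
  rw [← hinter]
  exact tendsto_measure_biInter_gt (fun r _ => measurableSet_ball.nullMeasurableSet)
    (fun r r' _ h => ball_subset_ball h) ⟨1, one_pos, hμ.measure_ball_ne_top a 1⟩

/-- Every ball around `a` contains, besides `a`, a ball whose fourfold enlargement contains `a`. -/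
theorem IsDoublingWith.measure_singleton_add_le (hμ : IsDoublingWith μ CD) (a : X)
    [(𝓝[≠] a).NeBot] {r : ℝ} (hr : 0 < r) :
    CD ^ 2 * μ {a} + μ {a} ≤ CD ^ 2 * μ (Metric.ball a r) := by
  obtain ⟨y, hyr, hya⟩ : (Metric.ball a (r / 2) ∩ {a}ᶜ).Nonempty :=
    (𝓝[≠] a).nonempty_of_mem
      (inter_mem (mem_nhdsWithin_of_mem_nhds (ball_mem_nhds a (half_pos hr))) self_mem_nhdsWithin)
  have hd : 0 < dist y a := dist_pos.2 hya
  rw [mem_ball] at hyr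
  have hsingle : μ {a} ≤ CD ^ 2 * μ (Metric.ball y (dist y a / 2)) := by
    refine le_trans (measure_mono ?_) (hμ.measure_ball_two_pow_mul_le y (half_pos hd) 2)
    rw [singleton_subset_iff, mem_ball, dist_comm]
    linarith
  have hdisj : Disjoint {a} (Metric.ball y (dist y a / 2)) := by
    rw [disjoint_singleton_left, mem_ball, dist_comm]
    linarith
  have hsub : {a} ∪ Metric.ball y (dist y a / 2) ⊆ Metric.ball a r :=
    union_subset (singleton_subset_iff.2 (mem_ball_self hr)) (ball_subset_ball' (by linarith))
  calc CD ^ 2 * μ {a} + μ {a}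
      ≤ CD ^ 2 * μ {a} + CD ^ 2 * μ (Metric.ball y (dist y a / 2)) := by gcongr
    _ = CD ^ 2 * μ ({a} ∪ Metric.ball y (dist y a / 2)) := by
        rw [measure_union hdisj measurableSet_ball, mul_add]
    _ ≤ CD ^ 2 * μ (Metric.ball a r) := by gcongr

theorem IsDoublingWith.measure_singleton (hμ : IsDoublingWith μ CD) (a : X) [(𝓝[≠] a).NeBot] :
    μ {a} = 0 := by
  have hfin : CD ^ 2 * μ {a} ≠ ⊤ := by
    refine mul_ne_top (by simp) (measure_ne_top_of_subset ?_ (hμ.measure_ball_ne_top a 1))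
    exact singleton_subset_iff.2 (mem_ball_self one_pos)
  have hlim : CD ^ 2 * μ {a} + μ {a} ≤ CD ^ 2 * μ {a} :=
    ge_of_tendsto (ENNReal.Tendsto.const_mul (hμ.tendsto_measure_ball a) (.inr (by simp)))
      (eventually_mem_nhdsWithin.mono fun r hr => hμ.measure_singleton_add_le a hr)
  exact nonpos_iff_eq_zero.1 ((ENNReal.add_le_add_iff_left hfin).1 (by rwa [add_zero]))

theorem IsDoublingWith.vanishesOnDiagonal [ConnectedSpace X] [Nontrivial X]
    (hμ : IsDoublingWith μ CD) (hs : 0 < s) : VanishesOnDiagonal μ s := by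
  intro a
  have hball : Tendsto (fun r => μ (Metric.ball a r)) (𝓝[>] 0) (𝓝 0) :=
    hμ.measure_singleton a ▸ hμ.tendsto_measure_ball a
  have hpair : Tendsto (fun y => μ (pairBall a y)) (𝓝 a) (𝓝 0) := by
    refine ENNReal.tendsto_nhds_zero.2 fun ε hε => ?_
    obtain ⟨r, hrε, hr : 0 < r⟩ :=
      ((ENNReal.tendsto_nhds_zero.1 hball ε hε).and self_mem_nhdsWithin).exists
    filter_upwards [closedBall_mem_nhds a (half_pos hr)] with y hy
    rw [mem_closedBall, dist_comm] at hy
    refine (measure_mono (pairBall_subset_ball hy)).trans ?_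
    rwa [mul_div_cancel₀ r two_ne_zero]
  have h := hpair.ennrpow_const (1 / s)
  rwa [ENNReal.zero_rpow_of_pos (one_div_pos.2 hs)] at h

theorem sum_measure_ball_half_le {x : X} {R : ℝ} {ε : ℝ≥0} {I : Finset X}
    (hI : ↑I ⊆ closedBall x R) (hsep : IsSeparated ε (I : Set X)) :
    ∑ i ∈ I, μ (Metric.ball i (ε / 2)) ≤ μ (Metric.ball x (R + ε)) := by
  have hdisj : (I : Set X).PairwiseDisjoint fun i => Metric.ball i ((ε : ℝ) / 2) := by
    refine fun i hi j hj hij => ball_disjoint_ball ?_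
    have hεij : (ε : ℝ≥0∞) < edist i j := hsep hi hj hij
    rw [edist_nndist, ENNReal.coe_lt_coe] at hεij
    rw [add_halves]
    exact hεij.le
  rw [← measure_biUnion_finset hdisj fun i _ => measurableSet_ball]
  refine measure_mono (iUnion₂_subset fun i hi y hy => ?_)
  have hix : dist i x ≤ R := hI hi
  have hyi : dist y i < ε / 2 := hy
  rw [mem_ball]
  linarith [dist_triangle y i x, ε.coe_nonneg]

theorem IsDoublingWith.sum_measure_ball_two_mul_le (hμ : IsDoublingWith μ CD) {x : X} {R : ℝ}
    {ε : ℝ≥0} (hε : 0 < ε) {I : Finset X} (hI : ↑I ⊆ closedBall x R)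
    (hsep : IsSeparated ε (I : Set X)) :
    ∑ i ∈ I, μ (Metric.ball i (2 * ε)) ≤ CD ^ 2 * μ (Metric.ball x (R + ε)) := by
  have hdouble : ∀ i ∈ I, μ (Metric.ball i (2 * ε)) ≤ CD ^ 2 * μ (Metric.ball i (ε / 2)) := by
    intro i _
    rw [show (2 : ℝ) * ε = 2 ^ 2 * (ε / 2) by ring]
    exact hμ.measure_ball_two_pow_mul_le i (by positivity) 2
  calc ∑ i ∈ I, μ (Metric.ball i (2 * ε)) ≤ ∑ i ∈ I, CD ^ 2 * μ (Metric.ball i (ε / 2)) :=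
        Finset.sum_le_sum hdouble
    _ = CD ^ 2 * ∑ i ∈ I, μ (Metric.ball i (ε / 2)) := Finset.mul_sum .. |>.symm
    _ ≤ CD ^ 2 * μ (Metric.ball x (R + ε)) := by
        gcongr
        exact sum_measure_ball_half_le hI hsep

theorem IsDoublingWith.exists_finset_cover_sum_measure_le (hμ : IsDoublingWith μ CD) {x : X}
    {R R' : ℝ} (hR : R < R') (hc : IsCompact (closedBall x R)) {δ : ℝ} (hδ : 0 < δ) :
    ∃ ε ≤ δ, ∃ I : Finset X, (∀ y ∈ closedBall x R, ∃ i ∈ I, dist i y ≤ ε) ∧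
      ∑ i ∈ I, μ (Metric.ball i (2 * ε)) ≤ CD ^ 2 * μ (Metric.ball x R') := by
  obtain ⟨ε, hε, hεδR⟩ : ∃ ε : ℝ≥0, 0 < ε ∧ (ε : ℝ) ≤ min δ (R' - R) :=
    ⟨⟨_, (lt_min hδ (sub_pos.2 hR)).le⟩, lt_min hδ (sub_pos.2 hR), le_rfl⟩
  obtain ⟨hεδ, hεR⟩ := le_min_iff.1 hεδR
  obtain ⟨I, hI, hsep, hcov⟩ := exists_finset_isSeparated_isCover hc hε.ne'
  refine ⟨ε, hεδ, I, fun y hy => ?_, (hμ.sum_measure_ball_two_mul_le hε hI hsep).trans ?_⟩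
  · obtain ⟨i, hi, hyi⟩ := mem_iUnion₂.1 (isCover_iff_subset_iUnion_closedBall.1 hcov hy)
    exact ⟨i, hi, dist_comm y i ▸ hyi⟩
  · gcongr
    linarith

end DoublingMeasures

section LevelSets

theorem exists_mem_sum_filter_le_div {α ι : Type*} [MeasurableSpace α] {ν : Measure α} {S : Set α}
    (hS₀ : ν S ≠ 0) (hS : ν S ≠ ⊤) (I : Finset ι) {A : ι → Set α} [∀ t, DecidablePred (t ∈ A ·)]
    (hA : ∀ i ∈ I, MeasurableSet (A i)) (w : ι → ℝ≥0∞) :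
    ∃ t ∈ S, ∑ i ∈ I with t ∈ A i, w i ≤ (∑ i ∈ I, w i * ν (A i)) / ν S := by
  have hmeas : ∀ i ∈ I, Measurable ((A i).indicator fun _ => w i) := fun i hi =>
    measurable_const.indicator (hA i hi)
  obtain ⟨t, htS, ht⟩ := exists_le_setLAverage hS₀ hS
    (Finset.measurable_fun_sum I hmeas).aemeasurable
  refine ⟨t, htS, ?_⟩
  calc ∑ i ∈ I with t ∈ A i, w i = ∑ i ∈ I, (A i).indicator (fun _ => w i) t := by
        simp only [Finset.sum_filter, indicator_apply]
    _ ≤ (∫⁻ t in S, ∑ i ∈ I, (A i).indicator (fun _ => w i) t ∂ν) / ν S := by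
        rwa [← setLAverage_eq]
    _ ≤ (∫⁻ t, ∑ i ∈ I, (A i).indicator (fun _ => w i) t ∂ν) / ν S := by
        gcongr
        exact Measure.restrict_le_self
    _ = (∑ i ∈ I, w i * ν (A i)) / ν S := by
        rw [lintegral_finsetSum I hmeas]
        congr 1
        exact Finset.sum_congr rfl fun i hi => lintegral_indicator_const (hA i hi) (w i)

theorem ofReal_sub_le_sum_volume {X ι : Type*} [TopologicalSpace X] {K : Set X}
    (hK : IsPreconnected K) {u : X → ℝ} (hu : ContinuousOn u K) {J : Finset ι} {A : ι → Set ℝ}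
    (hA : ∀ y ∈ K, ∃ i ∈ J, u y ∈ A i) {a b : X} (ha : a ∈ K) (hb : b ∈ K) :
    ENNReal.ofReal (u b - u a) ≤ ∑ i ∈ J, volume (A i) := by
  have hcover : Icc (u a) (u b) ⊆ ⋃ i ∈ J, A i := by
    intro t ht
    obtain ⟨y, hy, rfl⟩ := hK.intermediate_value ha hb hu ht
    simpa only [mem_iUnion, exists_prop] using hA y hy
  calc ENNReal.ofReal (u b - u a) = volume (Icc (u a) (u b)) := Real.volume_Icc.symm
    _ ≤ volume (⋃ i ∈ J, A i) := measure_mono hcover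
    _ ≤ ∑ i ∈ J, volume (A i) := measure_biUnion_finset_le J A

theorem volume_closedBall_toReal {c : ℝ} {m : ℝ≥0∞} (hm : m ≠ ⊤) :
    volume (closedBall c m.toReal) = 2 * m := by
  rw [Real.volume_closedBall, ofReal_mul two_pos.le, ofReal_ofNat, ofReal_toReal hm]

variable {X : Type*} [MetricSpace X] [MeasurableSpace X] {μ : Measure X} {s δ : ℝ}

/-- `g` changes along a step of length at most `δ` by at most the cost of that step, that is, it
is `1`-Lipschitz for the chain distance `q^δ_{μ,s}`. -/
def IsChainLipschitz (μ : Measure X) (s δ : ℝ) (g : X → ℝ) : Prop :=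
  ∀ y y', dist y y' ≤ δ → |g y - g y'| ≤ (μ (pairBall y y') ^ (1 / s)).toReal

theorem IsChainLipschitz.continuous {g : X → ℝ} (hg : IsChainLipschitz μ s δ g) (hδ : 0 < δ)
    (hμ : VanishesOnDiagonal μ s) : Continuous g := by
  refine continuous_iff_continuousAt.2 fun a => tendsto_iff_dist_tendsto_zero.2 ?_
  refine squeeze_zero' (.of_forall fun _ => dist_nonneg) ?_
    ((ENNReal.tendsto_toReal zero_ne_top).comp (hμ a))
  filter_upwards [closedBall_mem_nhds a hδ] with y hy
  rw [dist_comm]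
  exact hg a y (dist_comm y a ▸ hy)

theorem IsChainLipschitz.mem_closedBall_of_dist_le {g : X → ℝ} (hg : IsChainLipschitz μ s δ g)
    (hs : 0 ≤ s) {ε : ℝ} (hε : ε ≤ δ) {i y : X} (hi : μ (Metric.ball i (2 * ε)) ≠ ⊤)
    (hiy : dist i y ≤ ε) :
    g y ∈ closedBall (g i) (μ (Metric.ball i (2 * ε)) ^ (1 / s)).toReal := by
  have hs' : 0 ≤ 1 / s := one_div_nonneg.2 hs
  rw [mem_closedBall, dist_comm]
  refine (hg i y (hiy.trans hε)).trans (toReal_mono (rpow_ne_top_of_nonneg hs' hi) ?_)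
  gcongr
  exact pairBall_subset_ball hiy

/-- The `q^δ_{μ,s}`-distance from the set `A`, truncated at height `N`. -/
def truncatedDist (μ : Measure X) (s δ : ℝ) (A : Set X) (N : ℝ≥0) (y : X) : ℝ :=
  (min (⨅ a ∈ A, qDelta μ s δ a y) N).toReal

theorem truncatedDist_of_mem {A : Set X} (N : ℝ≥0) {y : X} (hy : y ∈ A) :
    truncatedDist μ s δ A N y = 0 := by
  have h : ⨅ a ∈ A, qDelta μ s δ a y = 0 :=
    nonpos_iff_eq_zero.1 (iInf₂_le_of_le y hy (qDelta_self y).le)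
  simp [truncatedDist, h]

theorem truncatedDist_of_forall_le_qDelta {A : Set X} {N : ℝ≥0} {y : X}
    (h : ∀ a ∈ A, N ≤ qDelta μ s δ a y) : truncatedDist μ s δ A N y = N := by
  rw [truncatedDist, min_eq_right (le_iInf₂ h), coe_toReal]

theorem isChainLipschitz_truncatedDist (hμ : ∀ y y', μ (pairBall y y') ^ (1 / s) ≠ ⊤) (A : Set X)
    (N : ℝ≥0) : IsChainLipschitz μ s δ (truncatedDist μ s δ A N) := by
  have hstep : ∀ y y', dist y y' ≤ δ → truncatedDist μ s δ A N y' - truncatedDist μ s δ A N y ≤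
      (μ (pairBall y y') ^ (1 / s)).toReal := by
    intro y y' hyy'
    have hfin (z : X) : min (⨅ a ∈ A, qDelta μ s δ a z) N ≠ ⊤ := by simp
    rw [sub_le_iff_le_add', truncatedDist, truncatedDist, ← toReal_add (hfin y) (hμ y y')]
    refine toReal_mono (add_ne_top.2 ⟨hfin y, hμ y y'⟩) ?_
    rw [← min_add_add_right]
    refine min_le_min ?_ le_self_add
    simp only [ENNReal.iInf_add]
    exact le_iInf₂ fun a ha => iInf₂_le_of_le a ha <|
      (qDelta_triangle a y y').trans (add_le_add le_rfl (qDelta_le_of_dist_le hyy'))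
  intro y y' hyy'
  rw [abs_sub_le_iff]
  refine ⟨?_, hstep y y' hyy'⟩
  rw [pairBall_comm]
  exact hstep y' y (dist_comm y y' ▸ hyy')

variable {CD : ℝ≥0}

theorem IsDoublingWith.qDelta_le_sum_of_isPreconnected (hμ : IsDoublingWith μ CD)
    (hv : VanishesOnDiagonal μ s) {K : Set X} (hK : IsPreconnected K) (hs : 0 ≤ s) (hδ : 0 < δ)
    {ε : ℝ} (hε : ε ≤ δ) {J : Finset X}
    (hJ : ∀ y ∈ K, ∃ i ∈ J, dist i y ≤ ε) {a b : X} (ha : a ∈ K) (hb : b ∈ K) :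
    qDelta μ s δ a b ≤ ∑ i ∈ J, 2 * μ (Metric.ball i (2 * ε)) ^ (1 / s) := by
  refine ENNReal.le_of_forall_nnreal_lt fun N hN => ?_
  have hlip : IsChainLipschitz μ s δ (truncatedDist μ s δ {a} N) :=
    isChainLipschitz_truncatedDist (hμ.measure_pairBall_rpow_ne_top hs) {a} N
  have hab : truncatedDist μ s δ {a} N b - truncatedDist μ s δ {a} N a = N := by
    rw [truncatedDist_of_mem N (mem_singleton a), sub_zero]
    exact truncatedDist_of_forall_le_qDelta (by simpa using hN.le)
  have hlength := ofReal_sub_le_sum_volume hK (hlip.continuous hδ hv).continuousOn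
    (fun y hy => (hJ y hy).imp fun i hi =>
      ⟨hi.1, hlip.mem_closedBall_of_dist_le hs hε (hμ.measure_ball_ne_top i _) hi.2⟩) ha hb
  rw [hab, ofReal_coe_nnreal] at hlength
  refine hlength.trans_eq (Finset.sum_congr rfl fun i _ => ?_)
  exact volume_closedBall_toReal
    (rpow_ne_top_of_nonneg (one_div_nonneg.2 hs) (hμ.measure_ball_ne_top i _))

/-- A discrete coarea argument: cover the ball by small balls and average over `t ∈ (0, τ)` the
total weight of those small balls whose image under `g` can contain `t`. -/
theorem IsChainLipschitz.exists_level_forall_qDelta_le [OpensMeasurableSpace X] {g : X → ℝ}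
    (hg : IsChainLipschitz μ 2 δ g) (hμ : IsDoublingWith μ CD) (hv : VanishesOnDiagonal μ 2)
    (hδ : 0 < δ) {x : X} {R R' : ℝ} (hR : R < R') (hc : IsCompact (closedBall x R)) {τ : ℝ≥0}
    (hτ : 0 < τ) :
    ∃ t ∈ Ioo (0 : ℝ) τ, ∀ K ⊆ closedBall x R, IsPreconnected K → (∀ y ∈ K, g y = t) →
      ∀ a ∈ K, ∀ b ∈ K, qDelta μ 2 δ a b ≤ 4 * CD ^ 2 * μ (Metric.ball x R') / τ := by
  classical
  obtain ⟨ε, hεδ, I, hI, hIsum⟩ := hμ.exists_finset_cover_sum_measure_le hR hc hδ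
  let m (i : X) : ℝ≥0∞ := μ (Metric.ball i (2 * ε)) ^ (1 / 2 : ℝ)
  let A (i : X) : Set ℝ := closedBall (g i) (m i).toReal
  have hball (i : X) : μ (Metric.ball i (2 * ε)) ≠ ⊤ := hμ.measure_ball_ne_top i _
  have hvol (i : X) : volume (A i) = 2 * m i :=
    volume_closedBall_toReal (rpow_ne_top_of_nonneg (by norm_num) (hball i))
  have hsq (i : X) : 2 * m i * (2 * m i) = 4 * μ (Metric.ball i (2 * ε)) := by
    rw [mul_mul_mul_comm, ← ENNReal.rpow_add_of_nonneg _ _ (by norm_num) (by norm_num)]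
    norm_num
  obtain ⟨t, ht, hsum⟩ := exists_mem_sum_filter_le_div (ν := volume) (S := Ioo (0 : ℝ) τ)
    (by simpa using hτ.ne') (by simp) I (A := A)
    (fun i _ => measurableSet_closedBall) (fun i => 2 * m i)
  refine ⟨t, ht, fun K hKR hK hKt a ha b hb => ?_⟩
  have hK_cover : ∀ y ∈ K, ∃ i ∈ I.filter (t ∈ A ·), dist i y ≤ ε := by
    intro y hy
    obtain ⟨i, hi, hiy⟩ := hI y (hKR hy)
    exact ⟨i, Finset.mem_filter.2 ⟨hi, hKt y hy ▸
      hg.mem_closedBall_of_dist_le two_pos.le hεδ (hball i) hiy⟩, hiy⟩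
  calc qDelta μ 2 δ a b ≤ ∑ i ∈ I with t ∈ A i, 2 * m i :=
        hμ.qDelta_le_sum_of_isPreconnected hv hK two_pos.le hδ hεδ hK_cover ha hb
    _ ≤ (∑ i ∈ I, 2 * m i * volume (A i)) / volume (Ioo (0 : ℝ) τ) := hsum
    _ = 4 * (∑ i ∈ I, μ (Metric.ball i (2 * ε))) / τ := by
        simp only [hvol, hsq, Finset.mul_sum, Real.volume_Ioo, sub_zero, ofReal_coe_nnreal]
    _ ≤ 4 * (CD ^ 2 * μ (Metric.ball x R')) / τ := by gcongr
    _ = 4 * CD ^ 2 * μ (Metric.ball x R') / τ := by rw [← mul_assoc]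

end LevelSets

section UltrafilterLimits

variable {ι X : Type*} [TopologicalSpace X] {𝒰 : Ultrafilter ι} {K : ι → Set X}

/-- The Kuratowski limit of the sets `K i` along the ultrafilter `𝒰`: the points each of whose
neighbourhoods meets `K i` for `𝒰`-almost every `i`. -/
def kuratowskiLim (𝒰 : Ultrafilter ι) (K : ι → Set X) : Set X :=
  {y | ∀ O ∈ 𝓝 y, ∀ᶠ i in 𝒰, (K i ∩ O).Nonempty}

theorem exists_nhds_eventually_disjoint_of_notMem_kuratowskiLim {y : X}
    (hy : y ∉ kuratowskiLim 𝒰 K) : ∃ O ∈ 𝓝 y, ∀ᶠ i in 𝒰, Disjoint (K i) O := by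
  rw [kuratowskiLim, mem_ofPred_eq] at hy
  push Not at hy
  obtain ⟨O, hO, hKO⟩ := hy
  exact ⟨O, hO, hKO.mono fun i hi => disjoint_iff_inter_eq_empty.2 hi⟩

theorem eventually_disjoint_of_disjoint_kuratowskiLim {C : Set X} (hC : IsCompact C)
    (hKC : Disjoint (kuratowskiLim 𝒰 K) C) : ∀ᶠ i in 𝒰, Disjoint (K i) C := by
  refine hC.induction_on (p := fun s => ∀ᶠ i in 𝒰, Disjoint (K i) s) ?_ ?_ ?_ fun y hy => ?_
  · simp
  · exact fun s t hst ht => ht.mono fun i hi => hi.mono_right hst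
  · exact fun s t hs ht => (hs.and ht).mono fun i hi => disjoint_union_right.2 hi
  · obtain ⟨O, hO, hKO⟩ := exists_nhds_eventually_disjoint_of_notMem_kuratowskiLim
      (disjoint_right.1 hKC hy)
    exact ⟨O, mem_nhdsWithin_of_mem_nhds hO, hKO⟩

theorem isClosed_kuratowskiLim : IsClosed (kuratowskiLim 𝒰 K) := by
  refine isOpen_compl_iff.1 (isOpen_iff_mem_nhds.2 fun y hy => ?_)
  obtain ⟨O, hO, hKO⟩ := exists_nhds_eventually_disjoint_of_notMem_kuratowskiLim hy
  filter_upwards [eventually_mem_nhds_iff.2 hO] with z hz hzK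
  obtain ⟨i, hi, hi'⟩ := ((hzK O hz).and hKO).exists
  exact not_disjoint_iff_nonempty_inter.2 hi hi'

theorem kuratowskiLim_subset {F : Set X} (hF : IsClosed F) (hKF : ∀ᶠ i in 𝒰, K i ⊆ F) :
    kuratowskiLim 𝒰 K ⊆ F := by
  intro y hy
  by_contra hyF
  obtain ⟨i, ⟨z, hzK, hzF⟩, hi⟩ := ((hy Fᶜ (hF.isOpen_compl.mem_nhds hyF)).and hKF).exists
  exact hzF (hi hzK)

theorem kuratowskiLim_nonempty {F : Set X} (hF : IsCompact F) (hKF : ∀ᶠ i in 𝒰, K i ⊆ F)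
    (hK : ∀ᶠ i in 𝒰, (K i).Nonempty) : (kuratowskiLim 𝒰 K).Nonempty := by
  by_contra hempty
  have hdisj : ∀ᶠ i in 𝒰, Disjoint (K i) F :=
    eventually_disjoint_of_disjoint_kuratowskiLim hF
      (by simp [not_nonempty_iff_eq_empty.1 hempty])
  obtain ⟨i, hi, hiF, z, hz⟩ := (hdisj.and (hKF.and hK)).exists
  exact disjoint_left.1 hi hz (hiF hz)

theorem isPreconnected_kuratowskiLim [T2Space X] {F : Set X} (hF : IsCompact F)
    (hKF : ∀ᶠ i in 𝒰, K i ⊆ F) (hK : ∀ᶠ i in 𝒰, IsPreconnected (K i)) :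
    IsPreconnected (kuratowskiLim 𝒰 K) := by
  rw [isPreconnected_closed_iff]
  rintro A B hA hB hAB ⟨a, ha, haA⟩ ⟨b, hb, hbB⟩
  by_contra hempty
  have hLc : IsCompact (kuratowskiLim 𝒰 K) :=
    hF.of_isClosed_subset isClosed_kuratowskiLim (kuratowskiLim_subset hF.isClosed hKF)
  have hLAB : Disjoint (kuratowskiLim 𝒰 K ∩ A) (kuratowskiLim 𝒰 K ∩ B) :=
    disjoint_left.2 fun y hyA hyB => hempty ⟨y, hyA.1, hyA.2, hyB.2⟩
  obtain ⟨V, W, hV, hW, hAV, hBW, hVW⟩ :=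
    SeparatedNhds.of_isCompact_isCompact (hLc.inter_right hA) (hLc.inter_right hB) hLAB
  have hLVW : Disjoint (kuratowskiLim 𝒰 K) (F \ (V ∪ W)) := disjoint_left.2 fun y hy hyVW =>
    hyVW.2 ((hAB hy).imp (fun h => hAV ⟨hy, h⟩) fun h => hBW ⟨hy, h⟩)
  obtain ⟨i, hiVW, hiF, hi, hiV, hiW⟩ :=
    ((eventually_disjoint_of_disjoint_kuratowskiLim (hF.diff (hV.union hW)) hLVW).and
      (hKF.and (hK.and ((ha V (hV.mem_nhds (hAV ⟨ha, haA⟩))).and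
        (hb W (hW.mem_nhds (hBW ⟨hb, hbB⟩))))))).exists
  have hsub : K i ⊆ V ∪ W := fun z hz =>
    by_contra fun hzVW => disjoint_left.1 hiVW hz ⟨hiF hz, hzVW⟩
  obtain ⟨z, -, hz⟩ := hi V W hV hW hsub hiV hiW
  exact disjoint_left.1 hVW hz.1 hz.2

end UltrafilterLimits

theorem VanishesOnDiagonal.qmu_le_of_mem_kuratowskiLim {X : Type*} [MetricSpace X]
    [MeasurableSpace X] {μ : Measure X} {s : ℝ} (hμ : VanishesOnDiagonal μ s) {𝒰 : Ultrafilter ℝ}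
    (h𝒰 : 𝒰 ≤ 𝓝[>] (0 : ℝ)) {K : ℝ → Set X} {S : ℝ≥0∞}
    (hS : ∀ᶠ δ in 𝒰, ∀ a ∈ K δ, ∀ b ∈ K δ, qDelta μ s δ a b ≤ S) {a b : X}
    (ha : a ∈ kuratowskiLim 𝒰 K) (hb : b ∈ kuratowskiLim 𝒰 K) : qmu μ s a b ≤ S := by
  refine qmu_le_of_forall_qDelta_le fun δ₀ hδ₀ => ENNReal.le_of_forall_pos_le_add fun ε hε _ => ?_
  have hnear := hμ.eventually_qDelta_le_add hδ₀ (ENNReal.coe_pos.2 hε) a b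
  rw [nhds_prod_eq] at hnear
  obtain ⟨P, hP, Q, hQ, hPQ⟩ := eventually_prod_iff.1 hnear
  have hle : ∀ᶠ δ in 𝒰, δ ≤ δ₀ :=
    h𝒰 (eventually_nhdsWithin_of_eventually_nhds (eventually_le_nhds hδ₀))
  obtain ⟨δ, ⟨a', ha', haP⟩, ⟨b', hb', hbQ⟩, hδ, hKS⟩ :=
    ((ha _ hP).and ((hb _ hQ).and (hle.and hS))).exists
  calc qDelta μ s δ₀ a b ≤ qDelta μ s δ₀ a' b' + ε := hPQ haP hbQ
    _ ≤ qDelta μ s δ a' b' + ε := by gcongr; exact qDelta_anti hδ a' b'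
    _ ≤ S + ε := by gcongr; exact hKS a' ha' b' hb'

section Separation

/-- `K` meets every connected set that joins `A` to `B`. Unlike `SeparatesSets`, this property
passes to Kuratowski limits of compact sets. -/
def Blocks {X : Type*} [TopologicalSpace X] (K A B : Set X) : Prop :=
  ∀ C, IsPreconnected C → (C ∩ A).Nonempty → (C ∩ B).Nonempty → (C ∩ K).Nonempty

variable {X : Type*} [MetricSpace X] {lam : ℝ}

theorem IsLLC.separatesSets_kuratowskiLim (hX : IsLLC X lam) (hlam : 0 < lam) {ι : Type*}
    {𝒰 : Ultrafilter ι} {K : ι → Set X} {A B : Set X} (hA : A ⊆ (kuratowskiLim 𝒰 K)ᶜ)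
    (hB : B ⊆ (kuratowskiLim 𝒰 K)ᶜ) (hK : ∀ᶠ i in 𝒰, Blocks (K i) A B) :
    SeparatesSets (kuratowskiLim 𝒰 K) A B := by
  refine ⟨hA, hB, fun a ha b hb hab => ?_⟩
  obtain ⟨C, hCK, hC, haC, hbC⟩ := hX.exists_isContinuum_of_isPreconnected hlam
    isPreconnected_connectedComponentIn isClosed_kuratowskiLim.isOpen_compl
    (connectedComponentIn_subset _ a) (mem_connectedComponentIn (hA ha))
    (hab ▸ mem_connectedComponentIn (hB hb))
  have hmiss := eventually_disjoint_of_disjoint_kuratowskiLim hC.1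
    (disjoint_right.2 fun y hy => hCK hy)
  obtain ⟨i, hi, hCi⟩ := (hmiss.and hK).exists
  obtain ⟨y, hyC, hyK⟩ := hCi C hC.2.isPreconnected ⟨a, haC, ha⟩ ⟨b, hbC, hb⟩
  exact disjoint_left.1 hi hyK hyC

theorem IsLLC.blocks_of_frontier (hX : IsLLC X lam) {x p : X} {r R : ℝ} (hR : 0 < R) {N : Set X}
    (hrN : Metric.ball x r ⊆ N) (hNR : frontier N ⊆ Metric.ball x (R / lam)) (hpN : p ∉ N)
    (hpR : p ∉ closedBall x R) : Blocks (frontier N) (Metric.ball x r) (closedBall x R)ᶜ := by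
  rintro C hC ⟨a, haC, har⟩ ⟨b, hbC, hbR⟩
  obtain ⟨L, hL, hLR, hbL, hpL⟩ := (hX x R hR).2 b p (fun h => hbR (ball_subset_closedBall h))
    fun h => hpR (ball_subset_closedBall h)
  obtain ⟨y, hyC | hyL, hyN⟩ := inter_frontier_nonempty_of_isPreconnected
    (hC.union b hbC hbL hL.2.isPreconnected) ⟨a, Or.inl haC, hrN har⟩ ⟨p, Or.inr hpL, hpN⟩
  · exact ⟨y, hyC, hyN⟩
  · exact absurd (hNR hyN) (hLR hyL)

theorem IsLLC.exists_blocks_level (hX : IsLLC X lam) (hlam : 1 ≤ lam) {x p : X} {r R : ℝ}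
    (hr : 0 < r) (hc : IsCompact (closedBall x R)) (hpR : p ∉ closedBall x R)
    (hp : FillableFrom p (closedBall x R)) {g : X → ℝ} (hg : Continuous g) {t : ℝ}
    (hgr : Metric.ball x (lam * r) ⊆ {y | g y ≤ t})
    (hgR : {y | g y ≤ t} ⊆ Metric.ball x (R / lam)) :
    ∃ K, IsPreconnected K ∧ (∀ y ∈ K, g y = t) ∧
      Blocks K (Metric.ball x r) (closedBall x R)ᶜ := by
  have hlam₀ : 0 < lam := one_pos.trans_le hlam
  have := hX.locallyConnectedSpace hlam₀
  have hxt : x ∈ {y | g y ≤ t} := hgr (mem_ball_self (mul_pos hlam₀ hr))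
  have hR : 0 < R := (div_pos_iff_of_pos_right hlam₀).1 (pos_of_mem_ball (hgR hxt))
  set E := connectedComponentIn {y | g y ≤ t} x
  have hER : E ⊆ Metric.ball x (R / lam) := (connectedComponentIn_subset _ x).trans hgR
  have hEF : E ⊆ closedBall x R :=
    hER.trans ((ball_subset_ball (div_le_self hR.le hlam)).trans ball_subset_closedBall)
  have hE_closed : IsClosed E :=
    isClosed_connectedComponentIn (isClosed_le hg continuous_const) x
  have hrE : Metric.ball x r ⊆ E := fun y hy => by
    obtain ⟨L, hL, hLr, hxL, hyL⟩ := (hX x r hr).1 x (mem_ball_self hr) y hy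
    exact hL.2.isPreconnected.subset_connectedComponentIn hxL (hLr.trans hgr) hyL
  obtain ⟨N, hEN, hpN, hNE, hN⟩ := hp E hEF
    ⟨hc.of_isClosed_subset hE_closed hEF, isConnected_connectedComponentIn_iff.2 hxt⟩
  have hN_frontier : frontier N ⊆ frontier E := fun y hy => by
    rw [hE_closed.frontier_eq]
    exact ⟨hNE hy, fun hyE => hy.2 (interior_mono hEN hyE)⟩
  exact ⟨frontier N, hN,
    fun y hy => frontier_sublevelComponent_subset hg t x (hN_frontier hy),
    hX.blocks_of_frontier hR (hrE.trans hEN) (hNE.trans hER) hpN hpR⟩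

variable [MeasurableSpace X] [OpensMeasurableSpace X] {μ : Measure X} {CD : ℝ≥0} {x p : X}
  {r R R₁ R₂ R₃ : ℝ} {τ : ℝ≥0}

theorem IsLLC.exists_blocks_qDelta_le (hX : IsLLC X lam) (hlam : 1 ≤ lam)
    (hμ : IsDoublingWith μ CD) (hv : VanishesOnDiagonal μ 2) {δ : ℝ} (hδ : 0 < δ)
    (hr : 0 < r) (hr₁ : lam * r ≤ R₁) (h₁₂ : R₁ < R₂) (h₂₃ : R₂ < R₃) (h₂R : R₂ ≤ R / lam)
    (hc : IsCompact (closedBall x R)) (hpR : p ∉ closedBall x R)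
    (hp : FillableFrom p (closedBall x R)) (hτ : 0 < τ)
    (hlow : ∀ a ∈ closedBall x R₁, ∀ b ∉ Metric.ball x R₂, τ ≤ qDelta μ 2 δ a b) :
    ∃ K ⊆ closedBall x R₂ \ Metric.ball x R₁, K.Nonempty ∧ IsPreconnected K ∧
      Blocks K (Metric.ball x r) (closedBall x R)ᶜ ∧
      ∀ a ∈ K, ∀ b ∈ K, qDelta μ 2 δ a b ≤ 4 * CD ^ 2 * μ (Metric.ball x R₃) / τ := by
  let g := truncatedDist μ 2 δ (closedBall x R₁) τ
  have hg : IsChainLipschitz μ 2 δ g :=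
    isChainLipschitz_truncatedDist (hμ.measure_pairBall_rpow_ne_top two_pos.le) _ τ
  have hg_inner : ∀ y ∈ closedBall x R₁, g y = 0 := fun y hy => truncatedDist_of_mem τ hy
  have hg_outer : ∀ y ∉ Metric.ball x R₂, g y = τ := fun y hy =>
    truncatedDist_of_forall_le_qDelta fun a ha => hlow a ha y hy
  have hlam₀ : 0 < lam := one_pos.trans_le hlam
  have hR₂ : 0 < R₂ := (mul_pos hlam₀ hr).trans_le (hr₁.trans h₁₂.le)
  have hR : 0 < R := (div_pos_iff_of_pos_right hlam₀).1 (hR₂.trans_le h₂R)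
  have hc₂ : IsCompact (closedBall x R₂) := hc.of_isClosed_subset isClosed_closedBall
    (closedBall_subset_closedBall (h₂R.trans (div_le_self hR.le hlam)))
  obtain ⟨t, ⟨ht₀, htτ⟩, ht⟩ := hg.exists_level_forall_qDelta_le hμ hv hδ h₂₃ hc₂ hτ
  have hinner : closedBall x R₁ ⊆ {y | g y ≤ t} := fun y hy => (hg_inner y hy).trans_le ht₀.le
  have houter : {y | g y ≤ t} ⊆ Metric.ball x R₂ := fun y (hy : g y ≤ t) =>
    by_contra fun hyR => (hy.trans_lt htτ).ne (hg_outer y hyR)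
  obtain ⟨K, hK, hKt, hblocks⟩ := hX.exists_blocks_level hlam hr hc hpR hp (hg.continuous hδ hv)
    ((ball_subset_closedBall.trans (closedBall_subset_closedBall hr₁)).trans hinner)
    (houter.trans (ball_subset_ball h₂R))
  have hKR₂ : K ⊆ closedBall x R₂ := fun y hy =>
    ball_subset_closedBall (houter (hKt y hy).le)
  have hKR₁ : ∀ y ∈ K, y ∉ Metric.ball x R₁ := fun y hy hyR =>
    ht₀.ne ((hg_inner y (ball_subset_closedBall hyR)).symm.trans (hKt y hy))
  have := hX.preconnectedSpace
  obtain ⟨y, -, hy⟩ :=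
    hblocks univ isPreconnected_univ ⟨x, mem_univ x, mem_ball_self hr⟩ ⟨p, mem_univ p, hpR⟩
  exact ⟨K, fun y hy => ⟨hKR₂ hy, hKR₁ y hy⟩, ⟨y, hy⟩, hK, hblocks, ht K hKR₂ hK hKt⟩

theorem IsLLC.exists_isContinuum_separatesSets (hX : IsLLC X lam) (hlam : 1 ≤ lam)
    (hμ : IsDoublingWith μ CD) (hv : VanishesOnDiagonal μ 2) (hr : 0 < r) (hr₁ : lam * r ≤ R₁)
    (h₁₂ : R₁ < R₂) (h₂₃ : R₂ < R₃) (h₃R : R₃ ≤ R / lam) (hc : IsCompact (closedBall x R))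
    (hpR : p ∉ closedBall x R) (hp : FillableFrom p (closedBall x R)) (hτ : 0 < τ)
    (hlow : ∀ a ∈ closedBall x R₁, ∀ b ∉ Metric.ball x R₂, τ < qmu μ 2 a b) :
    ∃ K, IsContinuum K ∧ K ⊆ closedBall x R₂ \ Metric.ball x R₁ ∧
      SeparatesSets K (Metric.ball x r) (closedBall x R)ᶜ ∧
      ∀ a ∈ K, ∀ b ∈ K, qmu μ 2 a b ≤ 4 * CD ^ 2 * μ (Metric.ball x R₃) / τ := by
  have hlam₀ : 0 < lam := one_pos.trans_le hlam
  have hrR₁ : r ≤ R₁ := (le_mul_of_one_le_left hr.le hlam).trans hr₁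
  have hR : 0 < R := (div_pos_iff_of_pos_right hlam₀).1 (by linarith)
  have hR₃R : R₃ ≤ R := h₃R.trans (div_le_self hR.le hlam)
  have hcomp : ∀ ρ ≤ R, IsCompact (closedBall x ρ) := fun ρ hρ =>
    hc.of_isClosed_subset isClosed_closedBall (closedBall_subset_closedBall hρ)
  have hlow' := hv.eventually_forall_le_qDelta h₁₂ h₂₃ (hcomp R₃ hR₃R) hlow
  choose! K hKF hK₀ hK hKblocks hKq using fun δ (h : δ ∈ Ioi (0 : ℝ) ∧ _) =>
    hX.exists_blocks_qDelta_le hlam hμ hv h.1 hr hr₁ h₁₂ h₂₃ (h₂₃.le.trans h₃R) hc hpR hp hτ h.2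
  let 𝒰 := Ultrafilter.of (𝓝[>] (0 : ℝ))
  have h𝒰 : (𝒰 : Filter ℝ) ≤ 𝓝[>] 0 := Ultrafilter.of_le _
  have hδ : ∀ᶠ δ in 𝒰, δ ∈ Ioi (0 : ℝ) ∧
      ∀ a ∈ closedBall x R₁, ∀ b ∉ Metric.ball x R₂, τ ≤ qDelta μ 2 δ a b :=
    h𝒰 (eventually_mem_nhdsWithin.and hlow')
  have hF : IsCompact (closedBall x R₂ \ Metric.ball x R₁) :=
    (hcomp R₂ (h₂₃.le.trans hR₃R)).diff isOpen_ball
  have hLF := kuratowskiLim_subset hF.isClosed (hδ.mono hKF)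
  refine ⟨kuratowskiLim 𝒰 K, ⟨hF.of_isClosed_subset isClosed_kuratowskiLim hLF,
    kuratowskiLim_nonempty hF (hδ.mono hKF) (hδ.mono hK₀),
    isPreconnected_kuratowskiLim hF (hδ.mono hKF) (hδ.mono hK)⟩, hLF,
    hX.separatesSets_kuratowskiLim hlam₀ (fun y hy hyL => ?_) (fun y hy hyL => ?_)
      (hδ.mono hKblocks), fun a ha b hb =>
      hv.qmu_le_of_mem_kuratowskiLim h𝒰 (hδ.mono hKq) ha hb⟩
  · exact (hLF hyL).2 (ball_subset_ball hrR₁ hy)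
  · exact hy (closedBall_subset_closedBall (h₂₃.le.trans hR₃R) (hLF hyL).1)

theorem IsLLC.exists_isContinuum_separatesSets_of_le_mul_qmu (hX : IsLLC X lam) (hlam : 1 ≤ lam)
    (hμ : IsDoublingWith μ CD) (hv : VanishesOnDiagonal μ 2) (hr : 0 < r) (hr₁ : lam * r ≤ R₁)
    (h₁₂ : R₁ < R₂) (h₂₃ : R₂ < R₃) (h₃R : R₃ ≤ R / lam) (hc : IsCompact (closedBall x R))
    (hpR : p ∉ closedBall x R) (hp : FillableFrom p (closedBall x R)) {m c : ℝ≥0} (hm : 0 < m)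
    (hc₀ : 0 < c)
    (hlow : ∀ a ∈ closedBall x R₁, ∀ b ∉ Metric.ball x R₂, m ≤ c * qmu μ 2 a b) :
    ∃ K, IsContinuum K ∧ K ⊆ closedBall x R₂ \ Metric.ball x R₁ ∧
      SeparatesSets K (Metric.ball x r) (closedBall x R)ᶜ ∧
      ∀ a ∈ K, ∀ b ∈ K, qmu μ 2 a b * m ≤ 8 * c * CD ^ 2 * μ (Metric.ball x R₃) := by
  set τ := m / (2 * c) with hτ
  have hτ₀ : 0 < τ := by positivity
  have hcτ : 2 * (c * τ) = m := by rw [hτ]; field_simp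
  obtain ⟨K, hK, hKF, hKsep, hKq⟩ := hX.exists_isContinuum_separatesSets hlam hμ hv hr hr₁ h₁₂ h₂₃
    h₃R hc hpR hp hτ₀ fun a ha b hb => by
      by_contra! hle
      have h : m ≤ c * τ := by
        exact_mod_cast (hlow a ha b hb).trans (mul_le_mul_right hle (c : ℝ≥0∞))
      linarith [mul_pos hc₀ hτ₀]
  refine ⟨K, hK, hKF, hKsep, fun a ha b hb => ?_⟩
  calc qmu μ 2 a b * m = 2 * c * (qmu μ 2 a b * τ) := by rw [← hcτ]; push_cast; ring
    _ ≤ 2 * c * (4 * CD ^ 2 * μ (Metric.ball x R₃)) :=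
      mul_le_mul_right (ENNReal.mul_le_of_le_div (hKq a ha b hb)) _
    _ = 8 * c * CD ^ 2 * μ (Metric.ball x R₃) := by ring

end Separation

section WeakMetricDoubling

variable {X : Type*} [MetricSpace X]

theorem ball_subset_pairBall {x a b : X} {r : ℝ} (h : r + dist x a ≤ dist a b) :
    Metric.ball x r ⊆ pairBall a b :=
  (ball_subset_ball' h).trans subset_union_left

variable [MeasurableSpace X] {μ : Measure X} {CW CD : ℝ≥0} {s : ℝ}

theorem IsWMDM.rpow_measure_ball_le (hw : IsWMDM μ s CW) (hs : 0 ≤ s) {x a b : X} {r : ℝ}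
    (h : r + dist x a ≤ dist a b) : μ (Metric.ball x r) ^ (1 / s) ≤ CW * qmu μ s a b :=
  (rpow_le_rpow (measure_mono (ball_subset_pairBall h)) (one_div_nonneg.2 hs)).trans (hw a b)

theorem IsWMDM.pos [Nontrivial X] (hw : IsWMDM μ s CW) (hs : 0 ≤ s) (hμ : IsDoublingWith μ CD) :
    0 < CW := by
  obtain ⟨x, y, hxy⟩ := exists_pair_ne X
  obtain ⟨hpos, hfin⟩ := hμ.1 x (dist x y) (dist_pos.2 hxy)
  refine pos_iff_ne_zero.2 ?_
  rintro rfl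
  have h := hw.rpow_measure_ball_le hs (x := x) (r := dist x y) (a := x) (b := y) (by simp)
  rw [ENNReal.coe_zero, zero_mul] at h
  exact (rpow_pos hpos hfin.ne).not_ge h

theorem IsLLC.exists_isContinuum_separatesSets_of_isWMDM [OpensMeasurableSpace X] {lam : ℝ}
    (hX : IsLLC X lam) (hlam : 1 ≤ lam) (hμ : IsDoublingWith μ CD) (hw : IsWMDM μ 2 CW)
    {x p : X} {r R : ℝ} (hr : 0 < r) (hrR : 8 * (lam * r) ≤ R / lam)
    (hc : IsCompact (closedBall x R)) (hpR : p ∉ closedBall x R)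
    (hp : FillableFrom p (closedBall x R)) {n : ℕ} (hn : lam ≤ 2 ^ n) :
    ∃ K, IsContinuum K ∧ K ⊆ closedBall x (6 * (lam * r)) \ Metric.ball x (2 * (lam * r)) ∧
      SeparatesSets K (Metric.ball x r) (closedBall x R)ᶜ ∧
      ∀ a ∈ K, ∀ b ∈ K,
        qmu μ 2 a b ≤ 8 * CW * CD ^ (5 + n) * μ (Metric.ball x r) ^ (1 / 2 : ℝ) := by
  have hlr : r ≤ lam * r := le_mul_of_one_le_left hr.le hlam
  have hR : 0 < R := (div_pos_iff_of_pos_right (one_pos.trans_le hlam)).1 (by linarith)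
  have hxp : x ≠ p := fun h => hpR (h ▸ mem_closedBall_self hR.le)
  have : Nontrivial X := ⟨x, p, hxp⟩
  have := hX.preconnectedSpace
  have : ConnectedSpace X := ⟨⟨x⟩⟩
  obtain ⟨hball₀, hball⟩ := hμ.1 x r hr
  have hm := ENNReal.coe_toNNReal
    (rpow_ne_top_of_nonneg (one_div_nonneg.2 zero_le_two) hball.ne)
  set m := (μ (Metric.ball x r) ^ (1 / 2 : ℝ)).toNNReal
  have hm₀ : (m : ℝ≥0∞) ≠ 0 := hm ▸ (rpow_pos hball₀ hball.ne).ne'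
  have hmm : μ (Metric.ball x r) = m * m := by
    rw [hm, ← ENNReal.rpow_add_of_nonneg _ _ (by norm_num) (by norm_num)]
    norm_num
  obtain ⟨K, hK, hKF, hKsep, hKq⟩ := hX.exists_isContinuum_separatesSets_of_le_mul_qmu hlam hμ
    (hμ.vanishesOnDiagonal two_pos) hr (R₁ := 2 * (lam * r)) (R₂ := 6 * (lam * r)) (m := m)
    (by linarith) (by linarith) (by linarith) hrR hc hpR hp
    (pos_iff_ne_zero.2 (ENNReal.coe_ne_zero.1 hm₀)) (hw.pos zero_le_two hμ) fun a ha b hb => by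
      rw [hm]
      refine hw.rpow_measure_ball_le zero_le_two ?_
      rw [mem_closedBall] at ha
      rw [mem_ball, not_lt] at hb
      linarith [dist_triangle_left b x a, dist_comm a x]
  refine ⟨K, hK, hKF, hKsep, fun a ha b hb => ?_⟩
  have hgrow : μ (Metric.ball x (8 * (lam * r))) ≤ CD ^ (3 + n) * μ (Metric.ball x r) := by
    refine (measure_mono (ball_subset_ball ?_)).trans (hμ.measure_ball_two_pow_mul_le x hr _)
    calc 8 * (lam * r) ≤ 8 * (2 ^ n * r) := by gcongr
      _ = 2 ^ (3 + n) * r := by ring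
  refine (ENNReal.mul_le_mul_iff_left hm₀ ENNReal.coe_ne_top).1 ?_
  calc qmu μ 2 a b * m ≤ 8 * CW * CD ^ 2 * μ (Metric.ball x (8 * (lam * r))) := hKq a ha b hb
    _ ≤ 8 * CW * CD ^ 2 * (CD ^ (3 + n) * μ (Metric.ball x r)) := by gcongr
    _ = 8 * CW * CD ^ (5 + n) * μ (Metric.ball x r) ^ (1 / 2 : ℝ) * m := by rw [← hm, hmm]; ring

end WeakMetricDoubling

theorem le_two_pow_ellOf {lam : ℝ} (hlam : 0 < lam) : lam ≤ 2 ^ ellOf lam := by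
  have h : Real.logb 2 lam ≤ ellOf lam :=
    (Int.le_ceil _).trans (by exact_mod_cast Int.self_le_toNat _)
  rwa [Real.logb_le_iff_le_rpow one_lt_two hlam, Real.rpow_natCast] at h

theorem statement8_general
    {X : Type*} [MetricSpace X] [MeasurableSpace X] [OpensMeasurableSpace X]
    (lam : ℝ) (CD CW : ℝ≥0) (μ : Measure X)
    (hlam : 1 ≤ lam) (hLLC : IsLLC X lam)
    (f : X → ↥Sphere2) (hf : IsOpenEmbedding f)
    (hdbl : IsDoublingWith μ CD) (hw : IsWMDM μ 2 CW) :
    ∀ (x : X) (r : ℝ), 0 < r →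
      IsCompact (Metric.closedBall x ((2 * lam) ^ 7 * r)) →
      (∃ U : Set X, IsTopDisk U ∧ Metric.closedBall x ((2 * lam) ^ 7 * r) ⊆ U) →
      ∃ K : Set X, IsContinuum K ∧
        K ⊆ Metric.closedBall x ((2 * lam) ^ 6 * r) \ Metric.ball x (2 * lam * r) ∧
        SeparatesSets K (Metric.ball x r) (Metric.closedBall x ((2 * lam) ^ 7 * r))ᶜ ∧
        (⨆ a ∈ K, ⨆ b ∈ K, qmu μ 2 a b) ≤
          8 * (CW : ℝ≥0∞) * (CD : ℝ≥0∞) ^ (12 + 4 * ellOf lam) *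
            μ (Metric.ball x r) ^ (1 / 2 : ℝ) := by
  rintro x r hr hc ⟨U, hU, hcU⟩
  obtain ⟨p, hpR, hp⟩ := hU.exists_fillableFrom hf hc hcU
  have hlam₀ : 0 < lam := one_pos.trans_le hlam
  have h₆ : lam * r ≤ lam ^ 6 * r := by gcongr; exact le_self_pow₀ hlam (by norm_num)
  have h₇ : (2 * lam) ^ 7 * r / lam = 128 * (lam ^ 6 * r) := by field_simp; norm_num
  have hlr : 0 < lam * r := mul_pos hlam₀ hr
  obtain ⟨K, hK, hKF, hKsep, hKq⟩ := hLLC.exists_isContinuum_separatesSets_of_isWMDM hlam hdbl hw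
    hr (by linarith) hc hpR hp (le_two_pow_ellOf hlam₀)
  have : Nonempty X := ⟨x⟩
  refine ⟨K, hK, hKF.trans (sdiff_subset_sdiff (closedBall_subset_closedBall ?_)
    (ball_subset_ball (mul_assoc 2 lam r).le)), hKsep, ?_⟩
  · calc 6 * (lam * r) ≤ 64 * (lam ^ 6 * r) := by linarith
      _ = (2 * lam) ^ 6 * r := by ring
  · refine iSup₂_le fun a ha => iSup₂_le fun b hb => (hKq a ha b hb).trans ?_
    have hexp : 5 + ellOf lam ≤ 12 + 4 * ellOf lam := by omega
    gcongr 8 * CW * ?_ * _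
    exact pow_le_pow_right₀ hdbl.one_le hexp

theorem statement8
    {X : Type*} [MetricSpace X] [MeasurableSpace X] [BorelSpace X]
    (lam : ℝ) (CD CW : ℝ≥0) (M : ℕ) (μ : Measure X)
    (hlam : 1 ≤ lam) (hLLC : IsLLC X lam)
    (hhom : ∃ Ω₀ : Set ↥Sphere2, IsCircleDomainS2 Ω₀ ∧ Nonempty (X ≃ₜ ↥Ω₀))
    (hcpt : CompactSpace (Completion X))
    (hfin : (residComps X).Finite) (hM : (residComps X).ncard = M)
    (hreg : μ.Regular) (hdbl : IsDoublingWith μ CD) (hw : IsWMDM μ 2 CW) :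
    ∀ (x : X) (r : ℝ), 0 < r →
      IsCompact (Metric.closedBall x ((2 * lam) ^ 7 * r)) →
      (∃ U : Set X, IsTopDisk U ∧ Metric.closedBall x ((2 * lam) ^ 7 * r) ⊆ U) →
      ∃ K : Set X, IsContinuum K ∧
        K ⊆ Metric.closedBall x ((2 * lam) ^ 6 * r) \ Metric.ball x (2 * lam * r) ∧
        SeparatesSets K (Metric.ball x r) (Metric.closedBall x ((2 * lam) ^ 7 * r))ᶜ ∧
        (⨆ a ∈ K, ⨆ b ∈ K, qmu μ 2 a b) ≤
          8 * (CW : ℝ≥0∞) * (CD : ℝ≥0∞) ^ (12 + 4 * ellOf lam) *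
            μ (Metric.ball x r) ^ (1 / 2 : ℝ) := by
  obtain ⟨Ω, ⟨hΩ, -, -⟩, ⟨h⟩⟩ := hhom
  exact statement8_general lam CD CW μ hlam hLLC _
    (hΩ.isOpenEmbedding_subtypeVal.comp h.isOpenEmbedding) hdbl hw

end
end

section
/- Let Ω ⊂ ℝ² be a circle domain whose complementary components are the closed disks D_i = D̄(z_i,r_i), i = 1,…,M, with all r_i > 0. Let i ≠ j and let N ≥ 2M−2 be an integer such that 2^{N+2} dist(D_i,D_j) ≤ min{r_i,r_j}. Then the conformal modulus of the family of paths joining D_i and D_j in Ω satisfies mod(D_i,D_j;Ω) ≥ (N−2M+2)·(2 log 2)/π. -/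
open Metric MeasureTheory Set Filter Topology UniformSpace ENNReal
open scoped NNReal

noncomputable section

/-!
Let `p` be the midpoint of the gap, of width `d`, between the two discs, both of which have radius
at least `R`. Each circle about `p` of radius `s ∈ [d, R / 16]` meets both discs in antipodal
points, so it contains two disjoint arcs of length at most `π s` joining them. If the circle avoids
the other discs, an admissible `ρ` has integral at least `1` over each arc, and Cauchy–Schwarz gives
`2 / (π s) ≤ s ∫ ρ² dθ`. Integrating over `s` in polar coordinates bounds the modulus below by
`2 / π` times the logarithmic measure of the set of such radii.

A further disc of radius `r` whose centre is at distance `m` from `p` blocks only radii in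
`[m - r, m + r]`. Since it is disjoint from both discs, Apollonius' theorem gives
`(r + R)² < m² + (R + d / 2)²`, which forces `m + r ≤ 4 max (m - r) d` as soon as `m - r ≤ R / 16`.
With `T = max (m - r) d`, the disc thus removes at most the interval `[T, 4 T]`, of logarithmic
measure `2 log 2`.
-/

section LineIntegrals

variable {Y : Type*} [PseudoEMetricSpace Y] {K : ℝ≥0} {γ : ℝ → Y}

lemma sum_setLIntegral_Ioc_adjacent (μ : Measure ℝ) (f : ℝ → ℝ≥0∞) {t : ℕ → ℝ} {n : ℕ}
    (ht : ∀ j < n, t j ≤ t (j + 1)) :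
    ∑ j ∈ Finset.range n, ∫⁻ x in Ioc (t j) (t (j + 1)), f x ∂μ =
      ∫⁻ x in Ioc (t 0) (t n), f x ∂μ := by
  induction n with
  | zero => simp
  | succ n ih =>
    have ht₀ : t 0 ≤ t n :=
      monotoneOn_of_le_add_one ordConnected_Iic
        (fun j _ _ hj => ht j hj) (mem_Iic.2 (by omega)) (mem_Iic.2 (by omega)) (Nat.zero_le n)
    rw [Finset.sum_range_succ, ih fun j hj => ht j (by omega),
      ← Ioc_union_Ioc_eq_Ioc ht₀ (ht n n.lt_succ_self),
      lintegral_union measurableSet_Ioc (Ioc_disjoint_Ioc_of_le le_rfl)]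

lemma iInf_mul_edist_le_setLIntegral (hγ : LipschitzWith K γ) (ρ : Y → ℝ≥0∞)
    {a b : ℝ} (hab : a ≤ b) :
    (⨅ u ∈ Icc a b, ρ (γ u)) * edist (γ a) (γ b) ≤ K * ∫⁻ u in Ioc a b, ρ (γ u) := by
  set m := ⨅ u ∈ Icc a b, ρ (γ u)
  calc m * edist (γ a) (γ b) ≤ m * (K * edist a b) := by gcongr; exact hγ a b
    _ = K * ∫⁻ _ in Ioc a b, m := by
      rw [setLIntegral_const, Real.volume_Ioc, edist_comm, edist_dist, Real.dist_eq,
        abs_of_nonneg (sub_nonneg.2 hab)]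
      ring
    _ ≤ K * ∫⁻ u in Ioc a b, ρ (γ u) := by
      gcongr (K : ℝ≥0∞) * ?_
      exact setLIntegral_mono' measurableSet_Ioc fun u hu =>
        biInf_le (fun v => ρ (γ v)) (Ioc_subset_Icc_self hu)

lemma lowerLineIntegral_le_of_lipschitzWith (hγ : LipschitzWith K γ) (ρ : Y → ℝ≥0∞) (a b : ℝ) :
    lowerLineIntegral ρ γ a b ≤ K * ∫⁻ u in Ioc a b, ρ (γ u) := by
  refine iSup_le fun n => iSup_le fun t => iSup_le fun ha => iSup_le fun hb => iSup_le fun ht => ?_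
  rw [← ha, ← hb, ← sum_setLIntegral_Ioc_adjacent volume _ ht, Finset.mul_sum]
  exact Finset.sum_le_sum fun j hj =>
    iInf_mul_edist_le_setLIntegral hγ ρ (ht j (Finset.mem_range.1 hj))

lemma openLineIntegral_le_of_lipschitzWith (hγ : LipschitzWith K γ) (ρ : Y → ℝ≥0∞) :
    openLineIntegral ρ γ ≤ K * ∫⁻ u in Ioo 0 1, ρ (γ u) := by
  refine iSup_le fun c => iSup_le fun d => iSup_le fun hc => iSup_le fun _ => iSup_le fun hd =>
    (lowerLineIntegral_le_of_lipschitzWith hγ ρ c d).trans ?_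
  gcongr
  exact fun u hu => ⟨hc.trans hu.1, hu.2.trans_lt hd⟩

lemma locRectifiableOn_of_lipschitzWith (hγ : LipschitzWith K γ) : LocRectifiableOn γ := by
  intro c d _ _ _
  simpa only [univ_inter] using
    (hγ.lipschitzOnWith.locallyBoundedVariationOn c d (mem_univ c) (mem_univ d)).lt_top

end LineIntegrals

section CrossingArcs

lemma exists_crossing_of_mem_closed {α X : Type*} [ConditionallyCompleteLinearOrder α]
    [TopologicalSpace α] [OrderTopology α] [TopologicalSpace X] {q : α → X} (hq : Continuous q)
    {A B : Set X} (hA : IsClosed A) (hB : IsClosed B) {a b : α} (ha : q a ∈ A) (hb : q b ∈ B) :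
    ∃ x ∈ uIcc a b, ∃ y ∈ uIcc a b, q x ∈ A ∧ q y ∈ B ∧ ∀ t ∈ uIoo x y, q t ∉ A ∧ q t ∉ B := by
  wlog hab : a ≤ b generalizing a b A B
  · obtain ⟨y, hy, x, hx, hyB, hxA, hmid⟩ := this hB hA hb ha (le_of_not_ge hab)
    rw [uIcc_comm] at hx hy
    exact ⟨x, hx, y, hy, hxA, hyB, fun t ht => (hmid t (uIoo_comm x y ▸ ht)).symm⟩
  rw [uIcc_of_le hab]
  obtain ⟨x, ⟨hx, hxA⟩, hxmax⟩ :=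
    (isCompact_Icc.inter_right (hA.preimage hq)).exists_isGreatest ⟨a, left_mem_Icc.2 hab, ha⟩
  obtain ⟨y, ⟨hy, hyB⟩, hymin⟩ :=
    (isCompact_Icc.inter_right (hB.preimage hq)).exists_isLeast ⟨b, right_mem_Icc.2 hx.2, hb⟩
  refine ⟨x, hx, y, ⟨hx.1.trans hy.1, hy.2⟩, hxA, hyB, fun t ht => ?_⟩
  rw [uIoo_of_le hy.1] at ht
  have htb : t ≤ b := ht.2.le.trans hy.2
  exact ⟨fun htA => ht.1.not_ge (hxmax ⟨⟨hx.1.trans ht.1.le, htb⟩, htA⟩),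
    fun htB => ht.2.not_ge (hymin ⟨⟨ht.1.le, htb⟩, htB⟩)⟩

lemma setLIntegral_comp_lineMap (f : ℝ → ℝ≥0∞) {x y : ℝ} (hxy : x ≠ y) :
    ENNReal.ofReal |y - x| * ∫⁻ u in Ioo (0 : ℝ) 1, f (AffineMap.lineMap x y u) =
      ∫⁻ t in uIoo x y, f t := by
  have himage : AffineMap.lineMap x y '' Ioo (0 : ℝ) 1 = uIoo x y := by
    rw [← openSegment_eq_image_lineMap, openSegment_eq_Ioo' hxy, Ioo_min_max]
  rw [← himage, lintegral_image_eq_lintegral_abs_deriv_mul measurableSet_Ioo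
    (fun _ _ => AffineMap.hasDerivWithinAt_lineMap) (AffineMap.lineMap_injective ℝ hxy).injOn,
    lintegral_const_mul' _ _ ENNReal.ofReal_ne_top]

variable {A B G : Set ℂ}

lemma mem_joinPaths_of_continuous {γ : ℝ → ℂ} (hγ : Continuous γ) (hA : γ 0 ∈ A) (hB : γ 1 ∈ B)
    (hG : MapsTo γ (Ioo 0 1) G) : γ ∈ joinPaths A B G := by
  have hclosure : MapsTo γ (Icc 0 1) (closure G) := by
    simpa only [closure_Ioo zero_ne_one] using hG.closure hγ
  exact ⟨hγ.continuousOn, hA, hB, hclosure unitInterval.zero_mem, hclosure unitInterval.one_mem, hG⟩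

lemma one_le_setLIntegral_of_isAdmissible_joinPaths {ρ : ℂ → ℝ≥0∞}
    (hρ : IsAdmissible (joinPaths A B G) ρ) (hA : IsClosed A) (hB : IsClosed B)
    (hAB : Disjoint A B) {K : ℝ≥0} {q : ℝ → ℂ} (hq : LipschitzWith K q) {a b : ℝ}
    (ha : q a ∈ A) (hb : q b ∈ B) (hG : ∀ t, q t ∈ A ∪ B ∪ G) :
    1 ≤ K * ∫⁻ t in uIoc a b, ρ (q t) := by
  obtain ⟨x, hx, y, hy, hxA, hyB, hmid⟩ := exists_crossing_of_mem_closed hq.continuous hA hB ha hb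
  have hxy : x ≠ y := ne_of_apply_ne q (hAB.ne_of_mem hxA hyB)
  have hmidG : MapsTo q (uIoo x y) G := fun t ht =>
    (hG t).resolve_left fun h => h.elim (hmid t ht).1 (hmid t ht).2
  have hγ := hq.comp (lipschitzWith_lineMap (𝕜 := ℝ) x y)
  have hmem : q ∘ AffineMap.lineMap x y ∈ joinPaths A B G := by
    refine mem_joinPaths_of_continuous hγ.continuous (by simpa) (by simpa) (hmidG.comp ?_)
    rw [mapsTo_iff_image_subset, ← openSegment_eq_image_lineMap, openSegment_eq_Ioo' hxy,
      Ioo_min_max]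
  calc 1 ≤ openLineIntegral ρ (q ∘ AffineMap.lineMap x y) :=
        hρ _ hmem (locRectifiableOn_of_lipschitzWith hγ)
    _ ≤ (K * nndist x y : ℝ≥0) * ∫⁻ u in Ioo 0 1, ρ (q (AffineMap.lineMap x y u)) :=
        openLineIntegral_le_of_lipschitzWith hγ ρ
    _ = K * ∫⁻ t in uIoo x y, ρ (q t) := by
        rw [← setLIntegral_comp_lineMap (fun t => ρ (q t)) hxy, ENNReal.coe_mul, mul_assoc,
          ← edist_nndist, edist_comm, edist_dist, Real.dist_eq]
    _ ≤ K * ∫⁻ t in uIoc a b, ρ (q t) := by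
        gcongr
        exact (uIoo_subset_Ioo hx hy).trans Ioo_subset_Ioc_self

end CrossingArcs

section CauchySchwarz

lemma sq_lintegral_le_measure_univ_mul {α : Type*} [MeasurableSpace α] (μ : Measure α)
    {f : α → ℝ≥0∞} (hf : AEMeasurable f μ) :
    (∫⁻ x, f x ∂μ) ^ 2 ≤ μ univ * ∫⁻ x, f x ^ 2 ∂μ := by
  have holder := ENNReal.lintegral_mul_le_Lp_mul_Lq μ Real.HolderConjugate.two_two hf
    (aemeasurable_const (b := 1))
  simp only [Pi.mul_apply, mul_one, lintegral_const, one_pow, one_mul,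
    ENNReal.rpow_two] at holder
  calc (∫⁻ x, f x ∂μ) ^ 2
      ≤ ((∫⁻ x, f x ^ 2 ∂μ) ^ (1 / 2 : ℝ) * μ univ ^ (1 / 2 : ℝ)) ^ 2 := by gcongr
    _ = μ univ * ∫⁻ x, f x ^ 2 ∂μ := by
      rw [← ENNReal.mul_rpow_of_nonneg _ _ (by norm_num), ← ENNReal.rpow_mul_natCast]
      norm_num [mul_comm]

lemma inv_mul_measure_univ_le_mul_lintegral_sq {α : Type*} [MeasurableSpace α] {μ : Measure α}
    {f : α → ℝ≥0∞} (hf : AEMeasurable f μ) {c : ℝ≥0∞} (h : 1 ≤ c * ∫⁻ x, f x ∂μ) :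
    (c * μ univ)⁻¹ ≤ c * ∫⁻ x, f x ^ 2 ∂μ := by
  rw [← one_div]
  refine ENNReal.div_le_of_le_mul ?_
  calc 1 ≤ (c * ∫⁻ x, f x ∂μ) ^ 2 := one_le_pow₀ h
    _ = c ^ 2 * (∫⁻ x, f x ∂μ) ^ 2 := mul_pow _ _ _
    _ ≤ c ^ 2 * (μ univ * ∫⁻ x, f x ^ 2 ∂μ) := by
      gcongr; exact sq_lintegral_le_measure_univ_mul μ hf
    _ = c * (∫⁻ x, f x ^ 2 ∂μ) * (c * μ univ) := by ring

end CauchySchwarz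

section Polar

open scoped Real

lemma setLIntegral_Ioc_add_period_eq {f : ℝ → ℝ≥0∞} {T : ℝ} (hf : Function.Periodic f T)
    (hT : 0 < T) (a b : ℝ) :
    ∫⁻ x in Ioc a (a + T), f x = ∫⁻ x in Ioc b (b + T), f x :=
  have : VAddInvariantMeasure (AddSubgroup.zmultiples T) ℝ volume :=
    ⟨fun c _ _ => measure_preimage_add _ _ _⟩
  (isAddFundamentalDomain_Ioc hT a).setLIntegral_eq (isAddFundamentalDomain_Ioc hT b) f
    hf.map_vadd_zmultiples

lemma lintegral_eq_lintegral_circleMap {f : ℂ → ℝ≥0∞} (hf : Measurable f) (p : ℂ) (φ : ℝ) :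
    ∫⁻ z, f z = ∫⁻ s in Ioi (0 : ℝ),
      ENNReal.ofReal s * ∫⁻ θ in Ioc (φ - π) (φ + π), f (circleMap p s θ) := by
  have hpolar (s θ : ℝ) : p + Complex.polarCoord.symm (s, θ) = circleMap p s θ := by
    rw [Complex.polarCoord_symm_apply, circleMap, Complex.exp_mul_I]
    push_cast
    rfl
  have hcirc : Measurable fun x : ℝ × ℝ => f (circleMap p x.1 x.2) :=
    hf.comp (by unfold circleMap; fun_prop)
  calc ∫⁻ z, f z = ∫⁻ z, f (p + z) := (lintegral_add_left_eq_self f p).symm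
    _ = ∫⁻ x in Ioi (0 : ℝ) ×ˢ Ioo (-π) π, ENNReal.ofReal x.1 * f (circleMap p x.1 x.2) := by
      simp_rw [← Complex.lintegral_comp_polarCoord_symm, hpolar, polarCoord_target, smul_eq_mul]
    _ = ∫⁻ s in Ioi (0 : ℝ), ENNReal.ofReal s * ∫⁻ θ in Ioo (-π) π, f (circleMap p s θ) := by
      rw [Measure.volume_eq_prod, ← Measure.prod_restrict, lintegral_prod _ (by fun_prop)]
      have hcirc_right (s : ℝ) : Measurable fun θ => f (circleMap p s θ) :=
        hcirc.comp measurable_prodMk_left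
      exact lintegral_congr fun s => by
        simp only [lintegral_const_mul _ (hcirc_right s)]
    _ = _ := by
      refine lintegral_congr fun s => ?_
      have hper : Function.Periodic (fun θ => f (circleMap p s θ)) (2 * π) :=
        (periodic_circleMap p s).comp f
      have hshift := setLIntegral_Ioc_add_period_eq hper Real.two_pi_pos (-π) (φ - π)
      rw [show -π + 2 * π = π by ring, show φ - π + 2 * π = φ + π by ring] at hshift
      rw [setLIntegral_congr Ioo_ae_eq_Ioc, hshift]

end Polar

section LogMeasure

/-- The measure `ds / s` on the positive half-line, extended by zero: the invariant measure of the
radius under dilations. -/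
def logMeasure : Measure ℝ :=
  volume.withDensity fun s => ENNReal.ofReal s⁻¹

lemma logMeasure_Icc {a b : ℝ} (ha : 0 < a) (hab : a ≤ b) :
    logMeasure (Icc a b) = ENNReal.ofReal (Real.log (b / a)) := by
  have hint : IntegrableOn (fun s : ℝ => s⁻¹) (Ioc a b) :=
    (intervalIntegral.intervalIntegrable_inv
      (fun s hs => (ha.trans_le (uIcc_of_le hab ▸ hs).1).ne') continuousOn_id).1
  rw [logMeasure, withDensity_apply _ measurableSet_Icc, ← setLIntegral_congr Ioc_ae_eq_Icc,
    ← integral_inv_of_pos ha (ha.trans_le hab), intervalIntegral.integral_of_le hab,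
    ofReal_integral_eq_lintegral_ofReal hint]
  filter_upwards [ae_restrict_mem measurableSet_Ioc] with s hs
  exact inv_nonneg.2 (ha.trans hs.1).le

lemma logMeasure_Icc_pow_mul {a c : ℝ} (ha : 0 < a) (hc : 1 ≤ c) (n : ℕ) :
    logMeasure (Icc a (c ^ n * a)) = ENNReal.ofReal (n * Real.log c) := by
  rw [logMeasure_Icc ha (le_mul_of_one_le_left ha.le (one_le_pow₀ hc)),
    mul_div_cancel_right₀ _ ha.ne', Real.log_pow]

lemma ofReal_le_logMeasure_Icc_diff_biUnion {ι : Type*} (I : Finset ι) {t : ι → ℝ}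
    (ht : ∀ k ∈ I, 0 < t k) {a : ℝ} (ha : 0 < a) (n : ℕ) :
    ENNReal.ofReal ((n - 2 * I.card) * Real.log 2) ≤
      logMeasure (Icc a (2 ^ n * a) \ ⋃ k ∈ I, Icc (t k) (4 * t k)) := by
  have hexcluded :
      logMeasure (⋃ k ∈ I, Icc (t k) (4 * t k)) ≤ ENNReal.ofReal (2 * I.card * Real.log 2) :=
    calc logMeasure (⋃ k ∈ I, Icc (t k) (4 * t k))
        ≤ ∑ k ∈ I, logMeasure (Icc (t k) (4 * t k)) := measure_biUnion_finset_le _ _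
      _ = ∑ _k ∈ I, ENNReal.ofReal (2 * Real.log 2) := Finset.sum_congr rfl fun k hk => by
        simpa [show (2 : ℝ) ^ 2 = 4 by norm_num] using
          logMeasure_Icc_pow_mul (ht k hk) one_le_two 2
      _ = ENNReal.ofReal (2 * I.card * Real.log 2) := by
        rw [Finset.sum_const, ← ENNReal.ofReal_nsmul, nsmul_eq_mul]
        ring_nf
  calc ENNReal.ofReal ((n - 2 * I.card) * Real.log 2)
      = ENNReal.ofReal (n * Real.log 2) - ENNReal.ofReal (2 * I.card * Real.log 2) := by
        rw [sub_mul, ENNReal.ofReal_sub _ (by positivity)]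
    _ ≤ logMeasure (Icc a (2 ^ n * a)) - logMeasure (⋃ k ∈ I, Icc (t k) (4 * t k)) := by
        rw [logMeasure_Icc_pow_mul ha one_le_two]
        gcongr
    _ ≤ _ := le_measure_sdiff

end LogMeasure

section CrossingCircles

open scoped Real

variable {A B G : Set ℂ}

lemma inv_le_mul_setLIntegral_sq_of_crossing {ρ : ℂ → ℝ≥0∞} (hρm : Measurable ρ)
    (hρ : IsAdmissible (joinPaths A B G) ρ) (hA : IsClosed A) (hB : IsClosed B)
    (hAB : Disjoint A B) {p : ℂ} {s : ℝ} (hs : 0 ≤ s) {a b : ℝ} (ha : circleMap p s a ∈ A)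
    (hb : circleMap p s b ∈ B) (hG : ∀ θ, circleMap p s θ ∈ A ∪ B ∪ G) :
    (ENNReal.ofReal s * ENNReal.ofReal |b - a|)⁻¹ ≤
      ENNReal.ofReal s * ∫⁻ θ in uIoc a b, ρ (circleMap p s θ) ^ 2 := by
  have hlength := one_le_setLIntegral_of_isAdmissible_joinPaths hρ hA hB hAB
    (lipschitzWith_circleMap p s) ha hb hG
  rw [Real.nnabs_of_nonneg hs, ENNReal.ofNNReal_toNNReal] at hlength
  have hρ_circle : Measurable fun θ => ρ (circleMap p s θ) :=
    hρm.comp (continuous_circleMap p s).measurable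
  simpa only [Measure.restrict_apply_univ, Real.volume_uIoc] using
    inv_mul_measure_univ_le_mul_lintegral_sq hρ_circle.aemeasurable hlength

lemma ofReal_two_div_pi_mul_inv_le_of_crossing {ρ : ℂ → ℝ≥0∞} (hρm : Measurable ρ)
    (hρ : IsAdmissible (joinPaths A B G) ρ) (hA : IsClosed A) (hB : IsClosed B)
    (hAB : Disjoint A B) {p : ℂ} {s φ : ℝ} (hs : 0 < s) (hsA : circleMap p s φ ∈ A)
    (hsB : circleMap p (-s) φ ∈ B) (hG : ∀ θ, circleMap p s θ ∈ A ∪ B ∪ G) :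
    ENNReal.ofReal (2 / π) * ENNReal.ofReal s⁻¹ ≤
      ENNReal.ofReal s * ∫⁻ θ in Ioc (φ - π) (φ + π), ρ (circleMap p s θ) ^ 2 := by
  rw [circleMap_neg_radius] at hsB
  have hsB' : circleMap p s (φ - π) ∈ B := by
    rwa [← (periodic_circleMap p s).sub_eq (φ + π), show φ + π - 2 * π = φ - π by ring] at hsB
  have hright := inv_le_mul_setLIntegral_sq_of_crossing hρm hρ hA hB hAB hs.le hsA hsB hG
  have hleft := inv_le_mul_setLIntegral_sq_of_crossing hρm hρ hA hB hAB hs.le hsA hsB' hG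
  rw [add_sub_cancel_left, abs_of_pos Real.pi_pos, uIoc_of_le (by linarith [Real.pi_pos])] at hright
  rw [sub_sub_cancel_left, abs_neg, abs_of_pos Real.pi_pos,
    uIoc_of_ge (by linarith [Real.pi_pos])] at hleft
  calc ENNReal.ofReal (2 / π) * ENNReal.ofReal s⁻¹
      = (ENNReal.ofReal s * ENNReal.ofReal π)⁻¹ + (ENNReal.ofReal s * ENNReal.ofReal π)⁻¹ := by
        rw [← ENNReal.ofReal_mul hs.le, ← ENNReal.ofReal_inv_of_pos (by positivity),
          ← ENNReal.ofReal_add (by positivity) (by positivity),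
          ← ENNReal.ofReal_mul (by positivity)]
        congr 1
        field
    _ ≤ _ := add_le_add hleft hright
    _ = _ := by
        rw [← mul_add, ← lintegral_union measurableSet_Ioc (Ioc_disjoint_Ioc_of_le le_rfl),
          Ioc_union_Ioc_eq_Ioc (by linarith [Real.pi_pos]) (by linarith [Real.pi_pos])]

theorem two_div_pi_mul_logMeasure_le_modulusC (hA : IsClosed A) (hB : IsClosed B)
    (hAB : Disjoint A B) {p : ℂ} {φ : ℝ} {S : Set ℝ} (hS : MeasurableSet S) (hS₀ : S ⊆ Ioi 0)
    (hSA : ∀ s ∈ S, circleMap p s φ ∈ A) (hSB : ∀ s ∈ S, circleMap p (-s) φ ∈ B)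
    (hSG : ∀ s ∈ S, ∀ θ, circleMap p s θ ∈ A ∪ B ∪ G) :
    ENNReal.ofReal (2 / π) * logMeasure S ≤ modulusC (joinPaths A B G) := by
  refine le_iInf fun ρ => le_iInf fun hρm => le_iInf fun hρ => ?_
  calc ENNReal.ofReal (2 / π) * logMeasure S
      = ∫⁻ s in S, ENNReal.ofReal (2 / π) * ENNReal.ofReal s⁻¹ := by
        rw [logMeasure, withDensity_apply _ hS, lintegral_const_mul _ (by fun_prop)]
    _ ≤ ∫⁻ s in S,
          ENNReal.ofReal s * ∫⁻ θ in Ioc (φ - π) (φ + π), ρ (circleMap p s θ) ^ 2 :=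
        setLIntegral_mono' hS fun s hs => ofReal_two_div_pi_mul_inv_le_of_crossing hρm hρ hA hB hAB
          (hS₀ hs) (hSA s hs) (hSB s hs) (hSG s hs)
    _ ≤ ∫⁻ s in Ioi (0 : ℝ),
          ENNReal.ofReal s * ∫⁻ θ in Ioc (φ - π) (φ + π), ρ (circleMap p s θ) ^ 2 :=
        lintegral_mono_set hS₀
    _ = ∫⁻ z, ρ z ^ 2 := (lintegral_eq_lintegral_circleMap (hρm.pow_const 2) p φ).symm

end CrossingCircles

section Geometry

lemma dist_midpoint_add_le_four_mul {E : Type*} [NormedAddCommGroup E] [InnerProductSpace ℝ E]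
    {a b c : E} {R d ρ : ℝ} (hρ : 0 ≤ ρ) (hd : 0 < d) (hdR : 16 * d ≤ R)
    (hab : dist a b = 2 * R + d) (hca : Disjoint (closedBall c ρ) (closedBall a R))
    (hcb : Disjoint (closedBall c ρ) (closedBall b R))
    (hc : 16 * (dist c (midpoint ℝ a b) - ρ) ≤ R) :
    dist c (midpoint ℝ a b) + ρ ≤ 4 * max (dist c (midpoint ℝ a b) - ρ) d := by
  have hR : 0 ≤ R := by linarith
  rw [disjoint_closedBall_closedBall_iff hρ hR] at hca hcb
  have hapollonius :=
    EuclideanGeometry.dist_sq_add_dist_sq_eq_two_mul_dist_midpoint_sq_add_half_dist_sq c a b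
  set m := dist c (midpoint ℝ a b)
  set T := max (m - ρ) d
  have hmT : m - ρ ≤ T := le_max_left _ _
  have hdT : d ≤ T := le_max_right _ _
  have hTR : 16 * T ≤ R := by
    rw [mul_max_of_nonneg _ _ (by norm_num)]
    exact max_le hc hdR
  have hmρ : 0 ≤ m + ρ := add_nonneg dist_nonneg hρ
  have htangent : (ρ + R) ^ 2 < m ^ 2 + (R + d / 2) ^ 2 := by
    rw [hab] at hapollonius
    nlinarith
  by_contra! hlt
  refine lt_irrefl (3 / 4 * (m + ρ) * R) ?_
  calc 3 / 4 * (m + ρ) * R ≤ 2 * ρ * R := mul_le_mul_of_nonneg_right (by linarith) hR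
    _ < (m - ρ) * (m + ρ) + R * d + d * d / 4 := by linarith
    _ ≤ R / 16 * (m + ρ) + R * ((m + ρ) / 4) + R / 16 * ((m + ρ) / 4) / 4 := by
      gcongr <;> linarith
    _ ≤ 3 / 4 * (m + ρ) * R := by nlinarith [mul_nonneg hmρ hR]

lemma dist_circleMap_circleMap_radius (p : ℂ) (s u φ : ℝ) :
    dist (circleMap p s φ) (circleMap p u φ) = |s - u| := by
  rw [dist_eq_norm, circleMap, circleMap, add_sub_add_left_eq_sub, ← sub_mul, norm_mul,
    Complex.norm_exp_ofReal_mul_I, mul_one, ← Complex.ofReal_sub, Complex.norm_real,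
    Real.norm_eq_abs]

lemma midpoint_circleMap_circleMap_neg (p : ℂ) (u φ : ℝ) :
    midpoint ℝ (circleMap p u φ) (circleMap p (-u) φ) = p := by
  rw [circleMap, circleMap, Complex.ofReal_neg, neg_mul, ← sub_eq_add_neg, midpoint_add_sub]

lemma mem_Icc_max_of_circleMap_mem_closedBall {p c : ℂ} {φ θ R d ρ s : ℝ} (hd : 0 < d)
    (hds : d ≤ s) (hsR : 16 * s ≤ R) (hs : circleMap p s θ ∈ closedBall c ρ)
    (hright : Disjoint (closedBall c ρ) (closedBall (circleMap p (R + d / 2) φ) R))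
    (hleft : Disjoint (closedBall c ρ) (closedBall (circleMap p (-(R + d / 2)) φ) R)) :
    s ∈ Icc (max (dist c p - ρ) d) (4 * max (dist c p - ρ) d) := by
  have hsp : dist (circleMap p s θ) p = s := circleMap_mem_sphere p (hd.trans_le hds).le θ
  rw [mem_closedBall] at hs
  have hlower : dist c p - ρ ≤ s := by linarith [dist_triangle_left c p (circleMap p s θ)]
  have hupper : s ≤ dist c p + ρ := by linarith [dist_triangle (circleMap p s θ) c p]
  have hcenters :
      dist (circleMap p (R + d / 2) φ) (circleMap p (-(R + d / 2)) φ) = 2 * R + d := by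
    rw [dist_circleMap_circleMap_radius, abs_of_nonneg (by linarith)]
    ring
  have hshadow :=
    dist_midpoint_add_le_four_mul (dist_nonneg.trans hs) hd (by linarith) hcenters hright hleft
  rw [midpoint_circleMap_circleMap_neg] at hshadow
  exact ⟨max_le hlower hds, hupper.trans (hshadow (by linarith))⟩

lemma exists_circleMap_closedBall_subset {a b : ℂ} {r₁ r₂ R d : ℝ} (h₁ : R ≤ r₁) (h₂ : R ≤ r₂)
    (hab : dist a b = r₁ + r₂ + d) :
    ∃ p φ, closedBall (circleMap p (R + d / 2) φ) R ⊆ closedBall a r₁ ∧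
      closedBall (circleMap p (-(R + d / 2)) φ) R ⊆ closedBall b r₂ := by
  set φ := (a - b).arg
  set p := circleMap a (-(r₁ + d / 2)) φ
  have hp (s : ℝ) : circleMap p s φ = circleMap a (s - (r₁ + d / 2)) φ := by
    simp only [p, circleMap]
    push_cast
    ring
  have hb : circleMap a (-(r₁ + r₂ + d)) φ = b := by
    rw [← hab, dist_eq_norm, circleMap, Complex.ofReal_neg, neg_mul,
      Complex.norm_mul_exp_arg_mul_I]
    ring
  refine ⟨p, φ, closedBall_subset_closedBall' ?_, closedBall_subset_closedBall' ?_⟩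
  · rw [hp, dist_eq_norm, circleMap_sub_center, norm_circleMap_zero, abs_of_nonpos (by linarith)]
    linarith
  · rw [hp, ← hb, dist_circleMap_circleMap_radius, abs_of_nonneg (by linarith)]
    linarith

lemma setSetDist_nonneg {X : Type*} [MetricSpace X] (s t : Set X) : 0 ≤ setSetDist s t :=
  Real.sInf_nonneg (forall_mem_image2.2 fun _ _ _ _ => dist_nonneg)

lemma dist_sub_sub_le_setSetDist {X : Type*} [MetricSpace X] {a b : X} {r₁ r₂ : ℝ}
    (h₁ : 0 ≤ r₁) (h₂ : 0 ≤ r₂) :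
    dist a b - r₁ - r₂ ≤ setSetDist (closedBall a r₁) (closedBall b r₂) := by
  refine le_csInf ((nonempty_closedBall.2 h₁).image2 (nonempty_closedBall.2 h₂)) ?_
  rintro _ ⟨x, hx, y, hy, rfl⟩
  have hxa : dist a x ≤ r₁ := mem_closedBall'.1 hx
  have hyb : dist y b ≤ r₂ := hy
  linarith [dist_triangle4 a x y b]

end Geometry

section Obstacles

open scoped Real

variable {ι : Type*} {c : ι → ℂ} {r : ι → ℝ} {A B G : Set ℂ}

theorem ofReal_le_modulusC_joinPaths_of_closedBall_subset (I : Finset ι) (hA : IsClosed A)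
    (hB : IsClosed B) (hAB : Disjoint A B)
    (hIA : ∀ k ∈ I, Disjoint (closedBall (c k) (r k)) A)
    (hIB : ∀ k ∈ I, Disjoint (closedBall (c k) (r k)) B)
    (hG : (A ∪ B ∪ ⋃ k ∈ I, closedBall (c k) (r k))ᶜ ⊆ G) {p : ℂ} {φ R d : ℝ} {n : ℕ}
    (hd : 0 < d) (hdR : 2 ^ (n + 4) * d ≤ R)
    (hRA : closedBall (circleMap p (R + d / 2) φ) R ⊆ A)
    (hRB : closedBall (circleMap p (-(R + d / 2)) φ) R ⊆ B) :
    ENNReal.ofReal (2 / π * ((n - 2 * I.card) * Real.log 2)) ≤ modulusC (joinPaths A B G) := by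
  set T : ι → ℝ := fun k => max (dist (c k) p - r k) d
  set S := Icc d (2 ^ n * d) \ ⋃ k ∈ I, Icc (T k) (4 * T k)
  have hS : MeasurableSet S :=
    measurableSet_Icc.diff (I.measurableSet_biUnion fun _ _ => measurableSet_Icc)
  have hSR {s : ℝ} (hs : s ∈ S) : 16 * s ≤ R := by
    calc 16 * s ≤ 16 * (2 ^ n * d) := by gcongr; exact hs.1.2
      _ = 2 ^ (n + 4) * d := by ring
      _ ≤ R := hdR
  have hSA : ∀ s ∈ S, circleMap p s φ ∈ A := fun s hs => hRA <| by
    rw [mem_closedBall, dist_circleMap_circleMap_radius, abs_le]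
    constructor <;> linarith [hs.1.1, hSR hs]
  have hSB : ∀ s ∈ S, circleMap p (-s) φ ∈ B := fun s hs => hRB <| by
    rw [mem_closedBall, dist_circleMap_circleMap_radius, abs_le]
    constructor <;> linarith [hs.1.1, hSR hs]
  have hSG : ∀ s ∈ S, ∀ θ, circleMap p s θ ∈ A ∪ B ∪ G := by
    intro s hs θ
    by_contra hθ
    have hθG : circleMap p s θ ∉ G := fun h => hθ (Or.inr h)
    obtain hθAB | hθI := not_not.1 (notMem_subset hG hθG)
    · exact hθ (Or.inl hθAB)
    · obtain ⟨k, hk, hθk⟩ := mem_iUnion₂.1 hθI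
      exact hs.2 (mem_iUnion₂.2 ⟨k, hk, mem_Icc_max_of_circleMap_mem_closedBall hd hs.1.1
        (hSR hs) hθk ((hIA k hk).mono_right hRA) ((hIB k hk).mono_right hRB)⟩)
  calc ENNReal.ofReal (2 / π * ((n - 2 * I.card) * Real.log 2))
      = ENNReal.ofReal (2 / π) * ENNReal.ofReal ((n - 2 * I.card) * Real.log 2) :=
        ENNReal.ofReal_mul (by positivity)
    _ ≤ ENNReal.ofReal (2 / π) * logMeasure S := by
        gcongr
        exact ofReal_le_logMeasure_Icc_diff_biUnion I (fun _ _ => hd.trans_le (le_max_right _ _))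
          hd n
    _ ≤ _ := two_div_pi_mul_logMeasure_le_modulusC hA hB hAB hS
        (fun _ hs => hd.trans_le hs.1.1) hSA hSB hSG

end Obstacles

theorem statement15_general {ι : Type*} [Fintype ι] (z : ι → ℂ) (r : ι → ℝ) {i j : ι}
    (hij : i ≠ j) (hi : ∀ k ≠ i, Disjoint (closedBall (z k) (r k)) (closedBall (z i) (r i)))
    (hj : ∀ k ≠ j, Disjoint (closedBall (z k) (r k)) (closedBall (z j) (r j)))
    {N : ℕ} (hN : 2 * Fintype.card ι ≤ N + 2)
    (hclose : 2 ^ (N + 2) * setSetDist (closedBall (z i) (r i)) (closedBall (z j) (r j)) ≤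
      min (r i) (r j)) :
    ENNReal.ofReal ((N - 2 * Fintype.card ι + 2) * (2 * Real.log 2) / Real.pi) ≤
      modulusC (joinPaths (closedBall (z i) (r i)) (closedBall (z j) (r j))
        (⋃ k, closedBall (z k) (r k))ᶜ) := by
  classical
  obtain ⟨hri, hrj⟩ : 0 ≤ r i ∧ 0 ≤ r j :=
    le_min_iff.1 ((mul_nonneg (by positivity) (setSetDist_nonneg _ _)).trans hclose)
  have hcard : (({i, j}ᶜ : Finset ι).card : ℝ) + 2 = Fintype.card ι := by
    rw [← Finset.card_compl_add_card {i, j}, Finset.card_pair hij, Nat.cast_add, Nat.cast_two]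
  obtain ⟨n, rfl⟩ : ∃ n, N = n + 2 :=
    Nat.exists_eq_add_of_le' (by have := Fintype.one_lt_card_iff.2 ⟨i, j, hij⟩; omega)
  obtain ⟨d, hd⟩ : ∃ d, dist (z i) (z j) = r i + r j + d := ⟨_, (add_sub_cancel _ _).symm⟩
  have hd_pos : 0 < d := by linarith [(disjoint_closedBall_closedBall_iff hri hrj).1 (hj i hij)]
  have hd_le : d ≤ setSetDist (closedBall (z i) (r i)) (closedBall (z j) (r j)) := by
    linarith [dist_sub_sub_le_setSetDist (a := z i) (b := z j) hri hrj]
  obtain ⟨p, φ, hpi, hpj⟩ :=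
    exists_circleMap_closedBall_subset (min_le_left (r i) (r j)) (min_le_right _ _) hd
  have hne {k : ι} (hk : k ∈ ({i, j}ᶜ : Finset ι)) : k ≠ i ∧ k ≠ j := by simpa using hk
  have hcover : ⋃ k, closedBall (z k) (r k) ⊆ closedBall (z i) (r i) ∪ closedBall (z j) (r j) ∪
      ⋃ k ∈ ({i, j}ᶜ : Finset ι), closedBall (z k) (r k) := by
    simp only [← Finset.mem_coe, Finset.coe_compl, Finset.coe_pair]
    rw [← biUnion_pair i j fun k => closedBall (z k) (r k), ← biUnion_union, union_compl_self,
      biUnion_univ]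
  convert ofReal_le_modulusC_joinPaths_of_closedBall_subset {i, j}ᶜ isClosed_closedBall
    isClosed_closedBall (hj i hij) (fun k hk => hi k (hne hk).1) (fun k hk => hj k (hne hk).2)
    (compl_subset_compl.2 hcover) hd_pos (hclose.trans' (by gcongr)) hpi hpj using 2
  rw [← hcard]
  push_cast
  ring

theorem statement15 (M : ℕ) (hM : 0 < M) (z : Fin M → ℂ) (r : Fin M → ℝ)
    (hr : ∀ i, 0 < r i)
    (hdisj : Pairwise fun i j =>
      Disjoint (Metric.closedBall (z i) (r i)) (Metric.closedBall (z j) (r j)))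
    (Ω : Set ℂ) (hΩ : Ω = (⋃ i, Metric.closedBall (z i) (r i))ᶜ)
    (i j : Fin M) (hij : i ≠ j) (N : ℕ) (hN : 2 * M ≤ N + 2)
    (hclose : (2 : ℝ) ^ (N + 2) *
        setSetDist (Metric.closedBall (z i) (r i)) (Metric.closedBall (z j) (r j)) ≤
      min (r i) (r j)) :
    ENNReal.ofReal (((N : ℝ) - 2 * M + 2) * (2 * Real.log 2) / Real.pi) ≤
      modulusC (joinPaths (Metric.closedBall (z i) (r i))
        (Metric.closedBall (z j) (r j)) Ω) := by
  subst hΩ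
  simpa only [Fintype.card_fin] using statement15_general z r hij (fun k hk => hdisj hk)
    (fun k hk => hdisj hk) ((Fintype.card_fin M).symm ▸ hN) hclose

end
end
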